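/- arXiv:2101.00868 — 8 statements merged into one kernel-verified Lean document; each statement's English description precedes it below -/
import Mathlib

section
/- Let q ≥ 2 and π be a permutation of {0,…,q−1}. For every x ∈ [0,1), the forward orbit of x under the rotated odometer F_π is either periodic or accumulates at 0; that is, either there exists n ≥ 1 with F_π^n(x) = x, or for every ε > 0 there exists n ≥ 1 with F_π^n(x) < ε. -/
open Classical in
/-- The von Neumann–Kakutani map `a : [0,1) → [0,1)`:
for `x ∈ [1 - 2^{1-n}, 1 - 2^{-n})`, `n ≥ 1`, `a x = x - 1 + 2^{1-n} + 2^{-n} = x - 1 + 3·2^{-n}`.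
Here `Nat.find h` is the least `n` with `x < 1 - 2^{-n}`, which for `x ∈ [0,1)` is exactly
the unique `n ≥ 1` with `1 - 2^{1-n} ≤ x < 1 - 2^{-n}`. -/
noncomputable def vnk (x : ℝ) : ℝ :=
  if h : ∃ n : ℕ, x < 1 - (2 : ℝ)⁻¹ ^ n then
    x - 1 + 3 * (2 : ℝ)⁻¹ ^ (Nat.find h)
  else 0

open Classical in
/-- The finite interval exchange `R_π : [0,1) → [0,1)` determined by a permutation `π` of
`{0,…,q-1}`: `R_π x = x + (π i - i)/q` for `x ∈ [i/q, (i+1)/q)`. -/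
noncomputable def rotPerm (q : ℕ) (π : Equiv.Perm (Fin q)) (x : ℝ) : ℝ :=
  if h : ∃ i : Fin q, x ∈ Set.Ico (((i : ℕ) : ℝ) / q) ((((i : ℕ) : ℝ) + 1) / q) then
    x + ((((π h.choose : Fin q) : ℕ) : ℝ) - (((h.choose : Fin q) : ℕ) : ℝ)) / q
  else x

/-- The rotated odometer `F_π = a ∘ R_π`. -/
noncomputable def rotOdo (q : ℕ) (π : Equiv.Perm (Fin q)) (x : ℝ) : ℝ :=
  vnk (rotPerm q π x)

/-!
If the orbit of `x` stays above `ε`, choose `N` with `2⁻ᴺ < ε`. Only the finitely many branches of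
the von Neumann–Kakutani map with values above `2⁻ᴺ` are then used, so along the orbit `F_π` moves
points by multiples of `1 / (q 2ᴺ)`. Hence the orbit lies in a bounded part of a coset of a discrete
group, so it is finite, and an injective map can only have a finite orbit if that orbit is periodic.
-/

open AddSubgroup Function Set

section General

theorem injOn_iUnion_of_disjoint_of_mapsTo {ι α β : Type*} {f : α → β} {s : ι → Set α}
    {t : ι → Set β} (hinj : ∀ i, InjOn f (s i)) (hmaps : ∀ i, MapsTo f (s i) (t i))
    (hdisj : Pairwise (Disjoint on t)) : InjOn f (⋃ i, s i) := by
  intro x hx y hy hxy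
  obtain ⟨i, hxi⟩ := mem_iUnion.1 hx
  obtain ⟨j, hyj⟩ := mem_iUnion.1 hy
  obtain rfl : i = j := by
    by_contra hij
    exact disjoint_left.1 (hdisj hij) (hmaps i hxi) (hxy ▸ hmaps j hyj)
  exact hinj i hxi hyj hxy

theorem mem_periodicPts_of_finite_range_iterate {α : Type*} {f : α → α} {s : Set α} {x : α}
    (hmaps : MapsTo f s s) (hinj : InjOn f s) (hx : x ∈ s)
    (hfin : (range fun n ↦ f^[n] x).Finite) : x ∈ periodicPts f := by
  obtain ⟨m, n, hmn, heq⟩ := hfin.exists_lt_map_eq_of_forall_mem fun n ↦ mem_range_self n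
  refine mk_mem_periodicPts (Nat.sub_pos_of_lt hmn) ?_
  refine hinj.iterate hmaps m (hmaps.iterate _ hx) hx ?_
  rw [← iterate_add_apply, Nat.add_sub_cancel' hmn.le]
  exact heq.symm

theorem mem_periodicPts_of_sub_mem_discrete {E : Type*} [NormedAddCommGroup E] [ProperSpace E]
    (L : AddSubgroup E) [DiscreteTopology L] {f : E → E} {s : Set E} {x : E}
    (hbdd : Bornology.IsBounded s) (hmaps : MapsTo f s s) (hinj : InjOn f s) (hx : x ∈ s)
    (hL : ∀ n, f^[n + 1] x - f^[n] x ∈ L) : x ∈ periodicPts f := by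
  have hcoset (n : ℕ) : f^[n] x - x ∈ L := by
    have htele : ∑ k ∈ Finset.range n, (f^[k + 1] x - f^[k] x) = f^[n] x - x :=
      Finset.sum_range_sub (fun k ↦ f^[k] x) n
    exact htele ▸ sum_mem fun k _ ↦ hL k
  have hfin : (((· - x) '' s) ∩ L).Finite :=
    Metric.finite_isBounded_inter_isClosed DiscreteTopology.isDiscrete
      ((IsometryEquiv.subRight x).isometry.lipschitz.isBounded_image hbdd) isClosed_of_discrete
  refine mem_periodicPts_of_finite_range_iterate hmaps hinj hx ?_
  refine (hfin.image (· + x)).subset ?_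
  rintro _ ⟨n, rfl⟩
  exact ⟨f^[n] x - x, ⟨mem_image_of_mem _ (hmaps.iterate n hx), hcoset n⟩, sub_add_cancel _ _⟩

end General

section VonNeumannKakutani

/-- The domain of the `n`-th branch of the von Neumann–Kakutani map. Branches are counted from `0`,
so this is the interval of index `n + 1` in the piecewise definition. -/
def vnkDomain (n : ℕ) : Set ℝ :=
  Ico (1 - 2⁻¹ ^ n) (1 - 2⁻¹ ^ (n + 1))

/-- The dyadic interval onto which the `n`-th branch of the von Neumann–Kakutani map translates
`vnkDomain n`. -/
def vnkTarget (n : ℕ) : Set ℝ :=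
  Ico (2⁻¹ ^ (n + 1)) (2⁻¹ ^ n)

theorem antitone_two_inv_pow : Antitone fun n : ℕ ↦ (2 : ℝ)⁻¹ ^ n :=
  pow_right_anti₀ (by norm_num) (by norm_num)

theorem iUnion_vnkDomain : ⋃ n, vnkDomain n = Ico 0 1 := by
  ext y
  simp only [mem_iUnion, vnkDomain, mem_Ico]
  constructor
  · rintro ⟨n, hle, hlt⟩
    have hpow : (2 : ℝ)⁻¹ ^ n ≤ 1 := pow_le_one₀ (by norm_num) (by norm_num)
    have hpos : (0 : ℝ) < 2⁻¹ ^ (n + 1) := by positivity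
    constructor <;> linarith
  · rintro ⟨h0, h1⟩
    obtain ⟨n, hlt, hle⟩ := exists_nat_pow_near_of_lt_one (sub_pos.2 h1) (sub_le_self 1 h0)
      (y := (2 : ℝ)⁻¹) (by norm_num) (by norm_num)
    exact ⟨n, by linarith, by linarith⟩

theorem vnkTarget_subset (n : ℕ) : vnkTarget n ⊆ Ico 0 1 :=
  Ico_subset_Ico (by positivity) (pow_le_one₀ (by norm_num) (by norm_num))

theorem pairwise_disjoint_vnkTarget : Pairwise (Disjoint on vnkTarget) :=
  antitone_two_inv_pow.pairwise_disjoint_on_Ico_succ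

theorem vnk_of_mem_vnkDomain {n : ℕ} {y : ℝ} (hy : y ∈ vnkDomain n) :
    vnk y = y - 1 + 3 * 2⁻¹ ^ (n + 1) := by
  have h : ∃ m : ℕ, y < 1 - (2 : ℝ)⁻¹ ^ m := ⟨n + 1, hy.2⟩
  have hfind : Nat.find h = n + 1 := by
    refine (Nat.find_eq_iff h).2 ⟨hy.2, fun m hm ↦ not_lt.2 ?_⟩
    have hpow : (2 : ℝ)⁻¹ ^ n ≤ 2⁻¹ ^ m := antitone_two_inv_pow (Nat.le_of_lt_succ hm)
    linarith [hy.1]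
  rw [vnk, dif_pos h, hfind]

theorem mapsTo_vnk_vnkDomain (n : ℕ) : MapsTo vnk (vnkDomain n) (vnkTarget n) := by
  intro y hy
  obtain ⟨hle, hlt⟩ := hy
  have hpow : (2 : ℝ)⁻¹ ^ (n + 1) = 2⁻¹ ^ n / 2 := by rw [pow_succ, div_eq_mul_inv]
  rw [vnk_of_mem_vnkDomain ⟨hle, hlt⟩]
  constructor <;> linarith

theorem mapsTo_vnk : MapsTo vnk (Ico 0 1) (Ico 0 1) := by
  rw [← iUnion_vnkDomain, mapsTo_iUnion, iUnion_vnkDomain]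
  exact fun n ↦ (mapsTo_vnk_vnkDomain n).mono_right (vnkTarget_subset n)

theorem injOn_vnk : InjOn vnk (Ico 0 1) := by
  rw [← iUnion_vnkDomain]
  refine injOn_iUnion_of_disjoint_of_mapsTo (fun n x hx y hy hxy ↦ ?_) mapsTo_vnk_vnkDomain
    pairwise_disjoint_vnkTarget
  rw [vnk_of_mem_vnkDomain hx, vnk_of_mem_vnkDomain hy] at hxy
  linarith

theorem vnk_sub_self_mem_zmultiples {N : ℕ} {y : ℝ} (hy : y ∈ Ico (0 : ℝ) 1)
    (hN : 2⁻¹ ^ N ≤ vnk y) : vnk y - y ∈ zmultiples ((2 : ℝ)⁻¹ ^ N) := by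
  rw [← iUnion_vnkDomain] at hy
  obtain ⟨n, hn⟩ := mem_iUnion.1 hy
  have hlt : n < N := antitone_two_inv_pow.reflect_lt
    (hN.trans_lt (mapsTo_vnk_vnkDomain n hn).2)
  obtain ⟨d, rfl : N = n + 1 + d⟩ := Nat.exists_eq_add_of_le (Nat.succ_le_of_lt hlt)
  refine mem_zmultiples_iff.2 ⟨3 * 2 ^ d - 2 ^ (n + 1 + d), ?_⟩
  rw [vnk_of_mem_vnkDomain hn, zsmul_eq_mul]
  push_cast
  simp only [inv_pow, pow_add]
  field_simp
  ring

end VonNeumannKakutani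

section IntervalExchange

/-- The interval `[i/q, (i+1)/q)`; those with `i < q` are the intervals exchanged by `rotPerm`. -/
def gridCell (q i : ℕ) : Set ℝ :=
  Ico ((i : ℝ) / q) ((i + 1 : ℝ) / q)

variable {q : ℕ}

theorem pairwise_disjoint_gridCell (q : ℕ) : Pairwise (Disjoint on gridCell q) := by
  have hmono : Monotone fun i : ℕ ↦ (i : ℝ) / q := fun i j hij ↦ by
    dsimp only
    gcongr
  intro i j hij
  simpa only [onFun, gridCell, Nat.succ_eq_succ, Nat.cast_succ] using
    hmono.pairwise_disjoint_on_Ico_succ hij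

theorem iUnion_gridCell (hq : 0 < q) : ⋃ i : Fin q, gridCell q i = Ico 0 1 := by
  have hq' : (0 : ℝ) < q := Nat.cast_pos.2 hq
  ext x
  simp only [mem_iUnion, gridCell, mem_Ico, div_le_iff₀ hq', lt_div_iff₀ hq']
  constructor
  · rintro ⟨i, hle, hlt⟩
    have hi : (i : ℝ) + 1 ≤ q := by exact_mod_cast i.isLt
    exact ⟨nonneg_of_mul_nonneg_left (i.val.cast_nonneg.trans hle) hq',
      lt_of_mul_lt_mul_right (by linarith) hq'.le⟩
  · rintro ⟨h0, h1⟩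
    have hxq : 0 ≤ x * q := mul_nonneg h0 hq'.le
    have hfloor : ⌊x * q⌋₊ < q := (Nat.floor_lt hxq).2 (mul_lt_of_lt_one_left hq' h1)
    exact ⟨⟨_, hfloor⟩, Nat.floor_le hxq, Nat.lt_floor_add_one _⟩

theorem rotPerm_of_mem_gridCell (π : Equiv.Perm (Fin q)) {i : Fin q} {x : ℝ}
    (hx : x ∈ gridCell q i) : rotPerm q π x = x + ((π i : ℕ) - (i : ℕ) : ℝ) / q := by
  have h : ∃ j : Fin q, x ∈ gridCell q j := ⟨i, hx⟩
  have hi : h.choose = i := Fin.ext <| by_contra fun hne ↦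
    disjoint_left.1 (pairwise_disjoint_gridCell q hne) h.choose_spec hx
  calc
    rotPerm q π x = x + ((π h.choose : ℕ) - (h.choose : ℕ) : ℝ) / q := dif_pos h
    _ = x + ((π i : ℕ) - (i : ℕ) : ℝ) / q := by rw [hi]

theorem mapsTo_rotPerm_gridCell (π : Equiv.Perm (Fin q)) (i : Fin q) :
    MapsTo (rotPerm q π) (gridCell q i) (gridCell q (π i)) := by
  intro x hx
  rw [rotPerm_of_mem_gridCell π hx]
  obtain ⟨hle, hlt⟩ := hx
  rw [add_div] at hlt
  rw [gridCell, mem_Ico, sub_div, add_div]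
  constructor <;> linarith

theorem mapsTo_rotPerm (hq : 0 < q) (π : Equiv.Perm (Fin q)) :
    MapsTo (rotPerm q π) (Ico 0 1) (Ico 0 1) := by
  rw [← iUnion_gridCell hq, mapsTo_iUnion]
  exact fun i ↦ (mapsTo_rotPerm_gridCell π i).mono_right
    (subset_iUnion (fun j : Fin q ↦ gridCell q j) (π i))

theorem injOn_rotPerm (hq : 0 < q) (π : Equiv.Perm (Fin q)) :
    InjOn (rotPerm q π) (Ico 0 1) := by
  rw [← iUnion_gridCell hq]
  refine injOn_iUnion_of_disjoint_of_mapsTo (fun i x hx y hy hxy ↦ ?_) (mapsTo_rotPerm_gridCell π)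
    ((pairwise_disjoint_gridCell q).comp_of_injective (Fin.val_injective.comp π.injective))
  rw [rotPerm_of_mem_gridCell π hx, rotPerm_of_mem_gridCell π hy] at hxy
  exact add_right_cancel hxy

theorem rotPerm_sub_self_mem_zmultiples (π : Equiv.Perm (Fin q)) (x : ℝ) :
    rotPerm q π x - x ∈ zmultiples (q : ℝ)⁻¹ := by
  by_cases h : ∃ i : Fin q, x ∈ gridCell q i
  · obtain ⟨i, hi⟩ := h
    rw [rotPerm_of_mem_gridCell π hi, add_sub_cancel_left]
    exact mem_zmultiples_iff.2 ⟨(π i : ℤ) - i, by rw [zsmul_eq_mul, div_eq_mul_inv]; push_cast; rfl⟩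
  · have hfix : rotPerm q π x = x := dif_neg h
    rw [hfix, sub_self]
    exact zero_mem _

end IntervalExchange

section RotatedOdometer

variable {q : ℕ}

theorem mapsTo_rotOdo (hq : 0 < q) (π : Equiv.Perm (Fin q)) :
    MapsTo (rotOdo q π) (Ico 0 1) (Ico 0 1) :=
  mapsTo_vnk.comp (mapsTo_rotPerm hq π)

theorem injOn_rotOdo (hq : 0 < q) (π : Equiv.Perm (Fin q)) : InjOn (rotOdo q π) (Ico 0 1) :=
  injOn_vnk.comp (injOn_rotPerm hq π) (mapsTo_rotPerm hq π)

theorem rotOdo_sub_self_mem_zmultiples (hq : 0 < q) (π : Equiv.Perm (Fin q)) {N : ℕ} {x : ℝ}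
    (hx : x ∈ Ico (0 : ℝ) 1) (hN : 2⁻¹ ^ N ≤ rotOdo q π x) :
    rotOdo q π x - x ∈ zmultiples ((q * 2 ^ N : ℝ)⁻¹) := by
  have hq' : (q : ℝ) ≠ 0 := Nat.cast_ne_zero.2 hq.ne'
  have hgrid : zmultiples (q : ℝ)⁻¹ ≤ zmultiples ((q * 2 ^ N : ℝ)⁻¹) :=
    zmultiples_le_of_mem (mem_zmultiples_iff.2 ⟨2 ^ N, by push_cast [zsmul_eq_mul]; field_simp⟩)
  have hdyadic : zmultiples ((2 : ℝ)⁻¹ ^ N) ≤ zmultiples ((q * 2 ^ N : ℝ)⁻¹) :=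
    zmultiples_le_of_mem
      (mem_zmultiples_iff.2 ⟨q, by push_cast [zsmul_eq_mul, inv_pow]; field_simp⟩)
  rw [← sub_add_sub_cancel _ (rotPerm q π x)]
  exact add_mem (hdyadic (vnk_sub_self_mem_zmultiples (mapsTo_rotPerm hq π hx) hN))
    (hgrid (rotPerm_sub_self_mem_zmultiples π x))

end RotatedOdometer

/-- every forward orbit of the rotated odometer is either periodic or
accumulates at `0`. -/
theorem rotOdo_orbit_periodic_or_accumulates_at_zero (q : ℕ) (hq : 2 ≤ q)
    (π : Equiv.Perm (Fin q)) (x : ℝ) (hx : x ∈ Set.Ico (0 : ℝ) 1) :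
    (∃ n : ℕ, 1 ≤ n ∧ (rotOdo q π)^[n] x = x) ∨
    (∀ ε : ℝ, 0 < ε → ∃ n : ℕ, 1 ≤ n ∧ (rotOdo q π)^[n] x < ε) := by
  have hq0 : 0 < q := by lia
  refine or_iff_not_imp_right.2 fun hacc ↦ ?_
  push Not at hacc
  obtain ⟨ε, hε, hfar⟩ := hacc
  obtain ⟨N, hN⟩ := exists_pow_lt_of_lt_one hε (show (2 : ℝ)⁻¹ < 1 by norm_num)
  have hstep (n : ℕ) :
      (rotOdo q π)^[n + 1] x - (rotOdo q π)^[n] x ∈ zmultiples ((q * 2 ^ N : ℝ)⁻¹) := by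
    have habove := hN.le.trans (hfar (n + 1) (Nat.le_add_left 1 n))
    rw [iterate_succ_apply'] at habove ⊢
    exact rotOdo_sub_self_mem_zmultiples hq0 π ((mapsTo_rotOdo hq0 π).iterate n hx) habove
  exact mem_periodicPts.1 (mem_periodicPts_of_sub_mem_discrete _ (Metric.isBounded_Ico 0 1)
    (mapsTo_rotOdo hq0 π) (injOn_rotOdo hq0 π) hx hstep)
end

section
/- Let q ≥ 2 and π be a permutation of {0,…,q−1}. The topological entropy of the rotated odometer F_π : [0,1) → [0,1), defined as the Bowen–Dinaburg cover entropy of the (not necessarily continuous) self-map F_π of the uniform space [0,1) with the uniformity induced by the Euclidean metric, equals 0. -/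
/-- The rotated odometer as a self-map of the uniform space `[0,1)` (with the uniformity
induced from the Euclidean metric on `ℝ`).  Since `F_π` maps `[0,1)` into `(0,1) ⊆ [0,1)`,
the junk value in the `else` branch is never attained. -/
noncomputable def rotOdoSub (q : ℕ) (π : Equiv.Perm (Fin q)) :
    (Set.Ico (0 : ℝ) 1) → (Set.Ico (0 : ℝ) 1) := fun x =>
  if h : rotOdo q π x ∈ Set.Ico (0 : ℝ) 1 then ⟨rotOdo q π x, h⟩
  else ⟨0, by constructor <;> norm_num⟩

/-!
Cut `[0,1)` into `q * 2 ^ k` cells of equal length and follow an orbit by the cells it visits.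
Both `R_π` and `a` translate intervals with endpoints on this grid by grid steps, except that `a`
folds the last interval `[1 - 2⁻ᵏ, 1)` into `[0, 2⁻ᵏ)`. Hence the cell of `x` determines the cell
of `F_π x` unless `F_π x` lies in one of the `q` cells covering `[0, 2⁻ᵏ)`. No orbit returns to `0`,
and `F_π` is right-continuous in the strong sense of preserving right neighbourhoods, so for `k`
large, orbits visit `[0, 2⁻ᵏ)` at most once in any `m` consecutive steps. Each block of `m` steps
therefore has at most `q + 1` continuations, which bounds the entropy at this scale by
`O(log (q + 1) / m)`, where `m` is arbitrary.
-/

namespace RotatedOdometer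

open Set Filter Topology Uniformity Dynamics

/-! ### Entropy and codings -/

section Coding

variable {X ι : Type*} {T : X → X} {j : X → ι} {s : Finset ι} {m : ℕ}

/-- The equivalence relation, viewed as an entourage, of carrying the same symbol under `j`. -/
def sameSymbol (j : X → ι) : SetRel X X := {p | j p.1 = j p.2}

instance : (sameSymbol j).IsSymm := ⟨fun _ _ h => Eq.symm h⟩

lemma sameSymbol_comp_self_subset : (sameSymbol j).comp (sameSymbol j) ⊆ sameSymbol j :=
  fun _ ⟨_, h₁, h₂⟩ => Eq.trans h₁ h₂

lemma exists_isDynCoverOf_card_le {κ : Type*} [Fintype κ] {V : SetRel X X} {n : ℕ} (c : X → κ)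
    (hc : ∀ x y, c x = c y → (x, y) ∈ dynEntourage T V n) :
    ∃ t : Finset X, IsDynCoverOf T univ V n t ∧ t.card ≤ Fintype.card κ := by
  classical
  refine ⟨Finset.univ.image (rangeSplitting c), fun x _ => ?_,
    Finset.card_image_le.trans (Fintype.card_subtype_le _)⟩
  exact ⟨rangeSplitting c ⟨c x, x, rfl⟩, by simp,
    hc _ _ (apply_rangeSplitting c ⟨c x, x, rfl⟩).symm⟩

lemma coverEntropyEntourage_le_log_card_code_div [Nonempty X] {κ : Type*} [Fintype κ]
    {V : SetRel X X} [V.IsSymm] {n : ℕ} (hn : n ≠ 0) (c : X → κ)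
    (hc : ∀ x y, c x = c y → (x, y) ∈ dynEntourage T V n) :
    coverEntropyEntourage T univ (V.comp V) ≤ (Real.log (Fintype.card κ) / n : ℝ) := by
  obtain ⟨t, ht, hcard⟩ := exists_isDynCoverOf_card_le c hc
  have hκ : (0 : ℝ) < Fintype.card κ :=
    Nat.cast_pos.2 (Fintype.card_pos_iff.2 (Nonempty.map c inferInstance))
  have hlog : ENNReal.log (Fintype.card κ) = (Real.log (Fintype.card κ) : ℝ) := by
    rw [← ENNReal.ofReal_natCast, ENNReal.log_ofReal_of_pos hκ]
  calc coverEntropyEntourage T univ (V.comp V)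
      ≤ ENNReal.log t.card / n := ht.coverEntropyEntourage_le_log_card_div (mapsTo_univ _ _) hn
    _ ≤ ENNReal.log (Fintype.card κ) / n :=
        EReal.div_le_div_right_of_nonneg (by positivity)
          (ENNReal.log_le_log (Nat.cast_le.2 hcard))
    _ = (Real.log (Fintype.card κ) / n : ℝ) := by rw [hlog, EReal.coe_div, EReal.coe_natCast]

/-- A coding `j` of the dynamics of `T` in which the symbol of `x` determines that of `T x`, unless
`T x` carries one of the ambiguous symbols in `s`; after visiting an ambiguous symbol, an orbit does
not visit any for the next `m` steps. -/
structure IsSparselyAmbiguousCoding (T : X → X) (j : X → ι) (s : Finset ι) (m : ℕ) : Prop where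
  step : ∀ ⦃x y⦄, j x = j y → j (T x) = j (T y) ∨ (j (T x) ∈ s ∧ j (T y) ∈ s)
  no_return : ∀ ⦃x⦄, j x ∈ s → ∀ t ∈ Icc 1 m, j (T^[t] x) ∉ s

open Classical in
/-- An ambiguous symbol visited by the orbit of `x` during the times `1, …, m`, if there is one. -/
noncomputable def visitedSymbol (T : X → X) (j : X → ι) (s : Finset ι) (m : ℕ) (x : X) :
    Option s :=
  if h : ∃ a : s, ∃ t ∈ Icc 1 m, j (T^[t] x) = a then some h.choose else none

namespace IsSparselyAmbiguousCoding

lemma not_lt_of_mem (h : IsSparselyAmbiguousCoding T j s m) {x : X} {t u : ℕ} (hum : u ≤ m)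
    (ht : j (T^[t] x) ∈ s) (hu : j (T^[u] x) ∈ s) : ¬t < u := by
  intro htu
  refine h.no_return ht (u - t) ⟨by omega, by omega⟩ ?_
  rwa [← Function.iterate_add_apply, Nat.sub_add_cancel htu.le]

lemma visitedSymbol_eq_some (h : IsSparselyAmbiguousCoding T j s m) {x : X} {t : ℕ}
    (ht : t ∈ Icc 1 m) (hs : j (T^[t] x) ∈ s) : visitedSymbol T j s m x = some ⟨_, hs⟩ := by
  have hvisit : ∃ a : s, ∃ u ∈ Icc 1 m, j (T^[u] x) = a := ⟨⟨_, hs⟩, t, ht, rfl⟩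
  obtain ⟨u, hu, hau⟩ := hvisit.choose_spec
  have hus : j (T^[u] x) ∈ s := hau ▸ hvisit.choose.2
  obtain rfl : t = u :=
    le_antisymm (not_lt.1 (h.not_lt_of_mem ht.2 hus hs)) (not_lt.1 (h.not_lt_of_mem hu.2 hs hus))
  rw [visitedSymbol, dif_pos hvisit]
  exact congrArg some (Subtype.ext hau.symm)

lemma apply_iterate_eq (h : IsSparselyAmbiguousCoding T j s m) {x y : X} (hxy : j x = j y)
    (hv : visitedSymbol T j s m x = visitedSymbol T j s m y) :
    ∀ i ≤ m, j (T^[i] x) = j (T^[i] y) := by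
  intro i
  induction i with
  | zero => exact fun _ => hxy
  | succ i ih =>
    intro hi
    have hstep := h.step (ih (by omega))
    simp only [← Function.iterate_succ_apply'] at hstep
    obtain heq | ⟨hx, hy⟩ := hstep
    · exact heq
    · have ht : i + 1 ∈ Icc 1 m := ⟨by omega, hi⟩
      rw [h.visitedSymbol_eq_some ht hx, h.visitedSymbol_eq_some ht hy] at hv
      exact congrArg Subtype.val (Option.some_injective _ hv)

lemma apply_iterate_mul_eq (h : IsSparselyAmbiguousCoding T j s m) {x y : X} (hxy : j x = j y)
    {r : ℕ} (hv : ∀ b < r,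
      visitedSymbol T j s m (T^[m * b] x) = visitedSymbol T j s m (T^[m * b] y)) :
    j (T^[m * r] x) = j (T^[m * r] y) := by
  induction r with
  | zero => exact hxy
  | succ r ih =>
    have hblock := h.apply_iterate_eq (ih fun b hb => hv b (by omega)) (hv r (by omega)) m le_rfl
    rwa [← Function.iterate_add_apply, ← Function.iterate_add_apply, Nat.add_comm m,
      ← Nat.mul_succ] at hblock

lemma mem_dynEntourage (h : IsSparselyAmbiguousCoding T j s m) (hm : m ≠ 0) {x y : X}
    (hxy : j x = j y) {r : ℕ} (hv : ∀ b < r,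
      visitedSymbol T j s m (T^[m * b] x) = visitedSymbol T j s m (T^[m * b] y)) :
    (x, y) ∈ dynEntourage T (sameSymbol j) (m * r) := by
  refine Dynamics.mem_dynEntourage.2 fun i hi => ?_
  have hb : i / m < r := Nat.div_lt_of_lt_mul hi
  have hstart := h.apply_iterate_mul_eq hxy fun b hbi => hv b (hbi.trans hb)
  have hblock := h.apply_iterate_eq hstart (hv _ hb) (i % m) (Nat.mod_lt _ (by omega)).le
  rwa [← Function.iterate_add_apply, ← Function.iterate_add_apply, Nat.mod_add_div] at hblock

lemma coverEntropyEntourage_sameSymbol_le [Nonempty X] (h : IsSparselyAmbiguousCoding T j s m)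
    (hm : m ≠ 0) (hj : (range j).Finite) :
    coverEntropyEntourage T univ (sameSymbol j) ≤ ((1 + Real.log (s.card + 1)) / m : ℝ) := by
  have := hj.fintype
  set M := Fintype.card (range j)
  have hM : 0 < M := Fintype.card_pos
  have hM' : (0 : ℝ) < M := Nat.cast_pos.2 hM
  have hm' : (0 : ℝ) < m := by positivity
  let c : X → range j × (Fin M → Option s) := fun x =>
    (rangeFactorization j x, fun b => visitedSymbol T j s m (T^[m * b] x))
  have hc (x y : X) (hxy : c x = c y) : (x, y) ∈ dynEntourage T (sameSymbol j) (m * M) :=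
    h.mem_dynEntourage hm (congrArg (fun d => (d.1 : ι)) hxy) fun b hb =>
      congrFun (congrArg Prod.snd hxy) ⟨b, hb⟩
  have hcard : Real.log (Fintype.card (range j × (Fin M → Option s))) ≤
      M * (1 + Real.log (s.card + 1)) := by
    simp only [Fintype.card_prod, Fintype.card_fun, Fintype.card_fin, Fintype.card_option,
      Fintype.card_coe, Nat.cast_mul, Nat.cast_pow, Nat.cast_add, Nat.cast_one]
    rw [Real.log_mul hM'.ne' (by positivity), Real.log_pow]
    linarith [Real.log_le_self hM'.le]
  calc coverEntropyEntourage T univ (sameSymbol j)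
      ≤ coverEntropyEntourage T univ ((sameSymbol j).comp (sameSymbol j)) :=
        coverEntropyEntourage_antitone _ _ sameSymbol_comp_self_subset
    _ ≤ (Real.log (Fintype.card (range j × (Fin M → Option s))) / (m * M : ℕ) : ℝ) :=
        coverEntropyEntourage_le_log_card_code_div (by positivity) c hc
    _ ≤ ((1 + Real.log (s.card + 1)) / m : ℝ) := by
        rw [EReal.coe_le_coe_iff, Nat.cast_mul, div_le_div_iff₀ (by positivity) hm']
        linarith [mul_le_mul_of_nonneg_right hcard hm'.le]

end IsSparselyAmbiguousCoding

theorem coverEntropy_univ_eq_zero_of_codings [UniformSpace X] [Nonempty X] {N : ℕ}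
    (h : ∀ U ∈ 𝓤 X, ∀ m : ℕ, ∃ (j : X → ι) (s : Finset ι), s.card ≤ N ∧ (range j).Finite ∧
      IsSparselyAmbiguousCoding T j s m ∧ sameSymbol j ⊆ U) :
    coverEntropy T univ = 0 := by
  refine le_antisymm (iSup₂_le fun U hU => ?_) (coverEntropy_nonneg T univ_nonempty)
  have hlim : Tendsto (fun m : ℕ => ((1 + Real.log (N + 1)) / m : ℝ).toEReal) atTop (𝓝 0) :=
    (continuous_coe_real_ereal.tendsto 0).comp (tendsto_const_div_atTop_nhds_zero_nat _)
  refine ge_of_tendsto hlim ?_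
  filter_upwards [eventually_ne_atTop 0] with m hm
  obtain ⟨j, s, hs, hj, hcode, hjU⟩ := h U hU m
  calc coverEntropyEntourage T univ U
      ≤ coverEntropyEntourage T univ (sameSymbol j) := coverEntropyEntourage_antitone _ _ hjU
    _ ≤ ((1 + Real.log (s.card + 1)) / m : ℝ) := hcode.coverEntropyEntourage_sameSymbol_le hm hj
    _ ≤ ((1 + Real.log (N + 1)) / m : ℝ) := by
        rw [EReal.coe_le_coe_iff]
        gcongr

end Coding

/-! ### Cells of a grid -/

section Grid

variable {α : Type*} [Field α] [LinearOrder α] [IsStrictOrderedRing α] [FloorRing α]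
  {h a b c x y : α}

lemma floor_add_div_eq (hh : h ≠ 0) (hc : c ∈ AddSubgroup.zmultiples h)
    (hxy : ⌊x / h⌋ = ⌊y / h⌋) : ⌊(x + c) / h⌋ = ⌊(y + c) / h⌋ := by
  obtain ⟨z, rfl⟩ := AddSubgroup.mem_zmultiples_iff.1 hc
  simp only [zsmul_eq_mul, add_div, mul_div_cancel_right₀ _ hh, Int.floor_add_intCast, hxy]

lemma le_iff_le_of_floor_div_eq (hh : 0 < h) (hc : c ∈ AddSubgroup.zmultiples h)
    (hxy : ⌊x / h⌋ = ⌊y / h⌋) : c ≤ x ↔ c ≤ y := by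
  obtain ⟨z, rfl⟩ := AddSubgroup.mem_zmultiples_iff.1 hc
  rw [zsmul_eq_mul, ← le_div_iff₀ hh, ← le_div_iff₀ hh, ← Int.le_floor, ← Int.le_floor, hxy]

lemma floor_div_eq_of_eqOn_add {f : α → α} (hf : EqOn f (· + c) (Ico a b)) (hh : 0 < h)
    (ha : a ∈ AddSubgroup.zmultiples h) (hb : b ∈ AddSubgroup.zmultiples h)
    (hc : c ∈ AddSubgroup.zmultiples h) (hx : x ∈ Ico a b) (hxy : ⌊x / h⌋ = ⌊y / h⌋) :
    ⌊f x / h⌋ = ⌊f y / h⌋ := by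
  have hy : y ∈ Ico a b :=
    ⟨(le_iff_le_of_floor_div_eq hh ha hxy).1 hx.1,
      not_le.1 ((le_iff_le_of_floor_div_eq hh hb hxy).not.1 (not_le.2 hx.2))⟩
  rw [hf hx, hf hy]
  exact floor_add_div_eq hh.ne' hc hxy

lemma abs_sub_lt_of_floor_div_eq (hh : 0 < h) (hxy : ⌊x / h⌋ = ⌊y / h⌋) : |x - y| < h := by
  have hlt := Int.abs_sub_lt_one_of_floor_eq_floor hxy
  rwa [← sub_div, abs_div, abs_of_pos hh, div_lt_one hh] at hlt

end Grid

/-! ### Preservation of right neighbourhoods -/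

lemma tendsto_nhdsGE_of_eqOn_add {α : Type*} [AddGroup α] [LinearOrder α] [AddRightMono α]
    [TopologicalSpace α] [ContinuousAdd α] [ClosedIciTopology α] {f : α → α} {a b c x : α}
    (hf : EqOn f (· + c) (Ico a b))
    (hx : x ∈ Ico a b) : Tendsto f (𝓝[≥] x) (𝓝[≥] f x) := by
  have htrans : Tendsto (· + c) (𝓝[≥] x) (𝓝[≥] (x + c)) :=
    (continuous_add_const c).continuousWithinAt.tendsto_nhdsWithin
      fun _ hy => add_le_add_left hy c
  rw [hf hx]
  exact htrans.congr' ((hf.eventuallyEq_of_mem (Ico_mem_nhdsGE_of_mem hx)).symm)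

lemma tendsto_iterate_nhdsGE {α : Type*} [TopologicalSpace α] [Preorder α] {f : α → α} {S : Set α}
    (hS : MapsTo f S S) (hf : ∀ x ∈ S, Tendsto f (𝓝[≥] x) (𝓝[≥] f x)) {x : α} (hx : x ∈ S)
    (t : ℕ) : Tendsto f^[t] (𝓝[≥] x) (𝓝[≥] f^[t] x) := by
  induction t with
  | zero => exact tendsto_id
  | succ t ih =>
    simp only [Function.iterate_succ', Function.comp_apply]
    exact (hf _ (hS.iterate t hx)).comp ih

lemma eventually_forall_Ico_le_of_tendsto_nhdsGE {α : Type*} [LinearOrder α] [TopologicalSpace α]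
    [OrderTopology α] [NoMaxOrder α] {f : α → α} {x : α} (hx : x < f x)
    (hf : Tendsto f (𝓝[≥] x) (𝓝[≥] f x)) : ∀ᶠ η in 𝓝[>] x, ∀ y ∈ Ico x η, η ≤ f y := by
  obtain ⟨δ, hδ, hsub⟩ := mem_nhdsGE_iff_exists_Ico_subset.1 (hf self_mem_nhdsWithin)
  filter_upwards [Ioc_mem_nhdsGT (lt_min hδ hx)] with η hη y hy
  exact (hη.2.trans (min_le_right _ _)).trans
    (hsub (Ico_subset_Ico_right (hη.2.trans (min_le_left _ _)) hy))

/-! ### The von Neumann–Kakutani map -/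

/-- The `n`-th interval of translation of `vnk`, counted from `n = 0`. -/
def dyadicPiece (n : ℕ) : Set ℝ := Ico (1 - (2 : ℝ)⁻¹ ^ n) (1 - (2 : ℝ)⁻¹ ^ (n + 1))

lemma exists_mem_dyadicPiece {x : ℝ} (hx : x ∈ Ico (0 : ℝ) 1) : ∃ n, x ∈ dyadicPiece n := by
  obtain ⟨n, hlt, hle⟩ := exists_nat_pow_near_of_lt_one (x := 1 - x) (y := (2 : ℝ)⁻¹)
    (by linarith [hx.2]) (by linarith [hx.1]) (by norm_num) (by norm_num)
  exact ⟨n, by linarith, by linarith⟩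

lemma eqOn_vnk_dyadicPiece (n : ℕ) :
    EqOn vnk (· + (3 * (2 : ℝ)⁻¹ ^ (n + 1) - 1)) (dyadicPiece n) := by
  classical
  intro x hx
  have hex : ∃ n : ℕ, x < 1 - (2 : ℝ)⁻¹ ^ n := ⟨n + 1, hx.2⟩
  have hfind : Nat.find hex = n + 1 := by
    refine (Nat.find_eq_iff hex).2 ⟨hx.2, fun l hl hlt => ?_⟩
    have hpow : (2 : ℝ)⁻¹ ^ n ≤ (2 : ℝ)⁻¹ ^ l :=
      pow_le_pow_of_le_one (by norm_num) (by norm_num) (by omega)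
    linarith [hx.1]
  simp only [vnk, dif_pos hex, ← hfind]
  ring

lemma mapsTo_vnk_dyadicPiece (n : ℕ) :
    MapsTo vnk (dyadicPiece n) (Ico ((2 : ℝ)⁻¹ ^ (n + 1)) ((2 : ℝ)⁻¹ ^ n)) := by
  intro x hx
  have hpow : (2 : ℝ)⁻¹ ^ n = 2 * (2 : ℝ)⁻¹ ^ (n + 1) := by ring
  rw [eqOn_vnk_dyadicPiece n hx]
  constructor <;> linarith [hx.1, hx.2]

lemma mapsTo_vnk : MapsTo vnk (Ico 0 1) (Ioo 0 1) := by
  intro x hx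
  obtain ⟨n, hn⟩ := exists_mem_dyadicPiece hx
  obtain ⟨hlow, hupp⟩ := mapsTo_vnk_dyadicPiece n hn
  exact ⟨lt_of_lt_of_le (by positivity) hlow,
    hupp.trans_le (pow_le_one₀ (by norm_num) (by norm_num))⟩

lemma vnk_lt_two_inv_pow {k : ℕ} {x : ℝ} (hx : x ∈ Ico (1 - (2 : ℝ)⁻¹ ^ k) 1) :
    vnk x < (2 : ℝ)⁻¹ ^ k := by
  have hk : (2 : ℝ)⁻¹ ^ k ≤ 1 := pow_le_one₀ (by norm_num) (by norm_num)
  obtain ⟨n, hn⟩ := exists_mem_dyadicPiece ⟨by linarith [hx.1], hx.2⟩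
  have hlt : (2 : ℝ)⁻¹ ^ (n + 1) < (2 : ℝ)⁻¹ ^ k := by linarith [hx.1, hn.2]
  have hkn : k < n + 1 := (pow_lt_pow_iff_right_of_lt_one₀ (by norm_num) (by norm_num)).1 hlt
  exact (mapsTo_vnk_dyadicPiece n hn).2.trans_le
    (pow_le_pow_of_le_one (by norm_num) (by norm_num) (by omega))

lemma tendsto_vnk_nhdsGE {x : ℝ} (hx : x ∈ Ico (0 : ℝ) 1) : Tendsto vnk (𝓝[≥] x) (𝓝[≥] vnk x) := by
  obtain ⟨n, hn⟩ := exists_mem_dyadicPiece hx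
  exact tendsto_nhdsGE_of_eqOn_add (eqOn_vnk_dyadicPiece n) hn

/-! ### The common grid -/

/-- The mesh of the grid of level `k`, which refines both the partition into `q` intervals of equal
length and the first `k` dyadic pieces. -/
noncomputable def mesh (q k : ℕ) : ℝ := (q : ℝ)⁻¹ * (2 : ℝ)⁻¹ ^ k

variable {q k : ℕ}

lemma mesh_le : mesh q k ≤ (2 : ℝ)⁻¹ ^ k :=
  mul_le_of_le_one_left (by positivity) (Nat.cast_inv_le_one q)

lemma intCast_div_mem_zmultiples (z : ℤ) : (z : ℝ) / q ∈ AddSubgroup.zmultiples (mesh q k) := by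
  refine AddSubgroup.mem_zmultiples_iff.2 ⟨z * 2 ^ k, ?_⟩
  simp only [mesh, zsmul_eq_mul, inv_pow]
  push_cast
  field_simp

variable [NeZero q]

lemma mesh_pos : 0 < mesh q k := by
  have hq : (0 : ℝ) < q := Nat.cast_pos.2 (NeZero.pos q)
  unfold mesh
  positivity

lemma mul_mesh : q * mesh q k = (2 : ℝ)⁻¹ ^ k :=
  mul_inv_cancel_left₀ (NeZero.ne _) _

lemma two_inv_pow_mem_zmultiples {n : ℕ} (hn : n ≤ k) :
    (2 : ℝ)⁻¹ ^ n ∈ AddSubgroup.zmultiples (mesh q k) := by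
  obtain ⟨d, rfl⟩ := Nat.exists_eq_add_of_le hn
  refine AddSubgroup.mem_zmultiples_iff.2 ⟨q * 2 ^ d, ?_⟩
  have hq : (q : ℝ) ≠ 0 := NeZero.ne _
  simp only [mesh, zsmul_eq_mul, inv_pow]
  push_cast
  field_simp
  ring

lemma one_mem_zmultiples : 1 ∈ AddSubgroup.zmultiples (mesh q k) := by
  simpa using two_inv_pow_mem_zmultiples (q := q) (Nat.zero_le k)

variable (π : Equiv.Perm (Fin q)) {x y : ℝ}

/-! ### The interval exchange -/

/-- The intervals exchanged by `rotPerm q π`. -/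
def exchangedInterval (q i : ℕ) : Set ℝ := Ico ((i : ℝ) / q) (((i : ℝ) + 1) / q)

lemma mem_exchangedInterval_iff {i : ℕ} : x ∈ exchangedInterval q i ↔ ⌊x * q⌋ = i := by
  have hq : (0 : ℝ) < q := Nat.cast_pos.2 (NeZero.pos q)
  rw [Int.floor_eq_iff, exchangedInterval, mem_Ico, div_le_iff₀ hq, lt_div_iff₀ hq,
    Int.cast_natCast]

lemma exists_mem_exchangedInterval (hx : x ∈ Ico (0 : ℝ) 1) :
    ∃ i : Fin q, x ∈ exchangedInterval q i := by
  have hq : (0 : ℝ) < q := Nat.cast_pos.2 (NeZero.pos q)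
  have hxq : 0 ≤ x * q := mul_nonneg hx.1 hq.le
  have hlt : ⌊x * q⌋₊ < q := (Nat.floor_lt hxq).2 (mul_lt_of_lt_one_left hq hx.2)
  exact ⟨⟨_, hlt⟩, mem_exchangedInterval_iff.2 (Int.natCast_floor_eq_floor hxq).symm⟩

lemma exchangedInterval_subset (i : Fin q) : exchangedInterval q i ⊆ Ico 0 1 := by
  have hq : (0 : ℝ) < q := Nat.cast_pos.2 (NeZero.pos q)
  have hi : ((i : ℕ) : ℝ) + 1 ≤ q := mod_cast i.2
  exact Ico_subset_Ico (by positivity) ((div_le_one hq).2 hi)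

lemma eqOn_rotPerm_exchangedInterval (i : Fin q) :
    EqOn (rotPerm q π) (· + (((π i : ℕ) : ℝ) - ((i : ℕ) : ℝ)) / q) (exchangedInterval q i) := by
  intro x hx
  have hex : ∃ i : Fin q, x ∈ exchangedInterval q i := ⟨i, hx⟩
  have hchoose : hex.choose = i := Fin.ext <| Nat.cast_injective (R := ℤ) <|
    (mem_exchangedInterval_iff.1 hex.choose_spec).symm.trans (mem_exchangedInterval_iff.1 hx)
  have hrot : rotPerm q π x = x + (((π hex.choose : ℕ) : ℝ) - ((hex.choose : ℕ) : ℝ)) / q :=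
    dif_pos hex
  rw [hrot, hchoose]

lemma mapsTo_rotPerm_exchangedInterval (i : Fin q) :
    MapsTo (rotPerm q π) (exchangedInterval q i) (exchangedInterval q (π i)) := by
  intro x hx
  rw [eqOn_rotPerm_exchangedInterval π i hx]
  obtain ⟨hlow, hupp⟩ := hx
  simp only [exchangedInterval, mem_Ico, add_div, sub_div] at hlow hupp ⊢
  constructor <;> linarith

lemma mapsTo_rotPerm : MapsTo (rotPerm q π) (Ico 0 1) (Ico 0 1) := by
  intro x hx
  obtain ⟨i, hi⟩ := exists_mem_exchangedInterval (q := q) hx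
  exact exchangedInterval_subset _ (mapsTo_rotPerm_exchangedInterval π i hi)

lemma tendsto_rotPerm_nhdsGE (hx : x ∈ Ico (0 : ℝ) 1) :
    Tendsto (rotPerm q π) (𝓝[≥] x) (𝓝[≥] rotPerm q π x) := by
  obtain ⟨i, hi⟩ := exists_mem_exchangedInterval (q := q) hx
  exact tendsto_nhdsGE_of_eqOn_add (eqOn_rotPerm_exchangedInterval π i) hi

/-! ### The rotated odometer -/

lemma mapsTo_rotOdo : MapsTo (rotOdo q π) (Ico 0 1) (Ioo 0 1) :=
  mapsTo_vnk.comp (mapsTo_rotPerm π)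

lemma semiconj_coe_rotOdoSub :
    Function.Semiconj ((↑) : Ico (0 : ℝ) 1 → ℝ) (rotOdoSub q π) (rotOdo q π) := fun x => by
  rw [rotOdoSub, dif_pos (Ioo_subset_Ico_self (mapsTo_rotOdo π x.2))]

lemma tendsto_rotOdo_nhdsGE (hx : x ∈ Ico (0 : ℝ) 1) :
    Tendsto (rotOdo q π) (𝓝[≥] x) (𝓝[≥] rotOdo q π x) :=
  (tendsto_vnk_nhdsGE (mapsTo_rotPerm π hx)).comp (tendsto_rotPerm_nhdsGE π hx)

lemma eventually_no_return_rotOdo (m : ℕ) :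
    ∀ᶠ η in 𝓝[>] (0 : ℝ), ∀ t ∈ Icc 1 m, ∀ x ∈ Ico 0 η, η ≤ (rotOdo q π)^[t] x := by
  have hself : MapsTo (rotOdo q π) (Ico 0 1) (Ico 0 1) :=
    (mapsTo_rotOdo π).mono_right Ioo_subset_Ico_self
  have h0 : (0 : ℝ) ∈ Ico (0 : ℝ) 1 := by simp
  refine (eventually_all_finite (finite_Icc 1 m)).2 fun t ht => ?_
  refine eventually_forall_Ico_le_of_tendsto_nhdsGE ?_
    (tendsto_iterate_nhdsGE hself (fun x => tendsto_rotOdo_nhdsGE π) h0 t)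
  obtain ⟨t, rfl⟩ := Nat.exists_eq_add_of_le' ht.1
  rw [Function.iterate_succ_apply']
  exact (mapsTo_rotOdo π (hself.iterate t h0)).1

lemma exists_two_inv_pow_lt_and_no_return {ε : ℝ} (hε : 0 < ε) (m : ℕ) :
    ∃ k : ℕ, (2 : ℝ)⁻¹ ^ k < ε ∧
      ∀ t ∈ Icc 1 m, ∀ x ∈ Ico 0 ((2 : ℝ)⁻¹ ^ k), (2 : ℝ)⁻¹ ^ k ≤ (rotOdo q π)^[t] x := by
  have hpow : Tendsto (fun k : ℕ => (2 : ℝ)⁻¹ ^ k) atTop (𝓝[>] 0) :=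
    tendsto_pow_atTop_nhdsWithin_zero_of_lt_one (by norm_num) (by norm_num)
  have hsmall : ∀ᶠ η in 𝓝[>] (0 : ℝ), η < ε :=
    eventually_nhdsWithin_of_eventually_nhds (eventually_lt_nhds hε)
  exact (hpow.eventually (hsmall.and (eventually_no_return_rotOdo π m))).exists

/-! ### Coding by grid cells -/

lemma floor_rotPerm_div_mesh_eq (hx : x ∈ Ico (0 : ℝ) 1)
    (hxy : ⌊x / mesh q k⌋ = ⌊y / mesh q k⌋) :
    ⌊rotPerm q π x / mesh q k⌋ = ⌊rotPerm q π y / mesh q k⌋ := by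
  obtain ⟨i, hi⟩ := exists_mem_exchangedInterval (q := q) hx
  exact floor_div_eq_of_eqOn_add (eqOn_rotPerm_exchangedInterval π i) mesh_pos
    (by simpa using intCast_div_mem_zmultiples (i : ℕ))
    (by simpa using intCast_div_mem_zmultiples ((i : ℕ) + 1))
    (by simpa using intCast_div_mem_zmultiples ((π i : ℕ) - (i : ℕ))) hi hxy

lemma floor_vnk_div_mesh_eq_or (hx : x ∈ Ico (0 : ℝ) 1) (hy : y ∈ Ico (0 : ℝ) 1)
    (hxy : ⌊x / mesh q k⌋ = ⌊y / mesh q k⌋) :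
    ⌊vnk x / mesh q k⌋ = ⌊vnk y / mesh q k⌋ ∨
      (vnk x < (2 : ℝ)⁻¹ ^ k ∧ vnk y < (2 : ℝ)⁻¹ ^ k) := by
  have hone := one_mem_zmultiples (q := q) (k := k)
  obtain ⟨n, hn⟩ := exists_mem_dyadicPiece hx
  rcases lt_or_ge n k with hnk | hkn
  · left
    have hlow := two_inv_pow_mem_zmultiples (q := q) hnk.le
    have hupp := two_inv_pow_mem_zmultiples (q := q) (Nat.succ_le_of_lt hnk)
    refine floor_div_eq_of_eqOn_add (eqOn_vnk_dyadicPiece n) mesh_pos (sub_mem hone hlow)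
      (sub_mem hone hupp) (sub_mem ?_ hone) hn hxy
    simpa using nsmul_mem hupp 3
  · right
    have hpow : (2 : ℝ)⁻¹ ^ n ≤ (2 : ℝ)⁻¹ ^ k :=
      pow_le_pow_of_le_one (by norm_num) (by norm_num) hkn
    have hx' : 1 - (2 : ℝ)⁻¹ ^ k ≤ x := by linarith [hn.1]
    have hy' : 1 - (2 : ℝ)⁻¹ ^ k ≤ y :=
      (le_iff_le_of_floor_div_eq mesh_pos
        (sub_mem hone (two_inv_pow_mem_zmultiples le_rfl)) hxy).1 hx'
    exact ⟨vnk_lt_two_inv_pow ⟨hx', hx.2⟩, vnk_lt_two_inv_pow ⟨hy', hy.2⟩⟩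

/-- The index of the grid cell of level `k` containing `x`. -/
noncomputable def cellIndex (q k : ℕ) (x : Ico (0 : ℝ) 1) : ℤ := ⌊(x : ℝ) / mesh q k⌋

lemma finite_range_cellIndex : (range (cellIndex q k)).Finite := by
  refine (finite_Icc 0 ⌊1 / mesh q k⌋).subset (range_subset_iff.2 fun x => ?_)
  have hx := x.2
  exact ⟨Int.floor_nonneg.2 (div_nonneg hx.1 mesh_pos.le),
    Int.floor_mono (div_le_div_of_nonneg_right hx.2.le mesh_pos.le)⟩

lemma cellIndex_mem_Ico_iff {x : Ico (0 : ℝ) 1} :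
    cellIndex q k x ∈ Finset.Ico (0 : ℤ) q ↔ (x : ℝ) < (2 : ℝ)⁻¹ ^ k := by
  have hnonneg : 0 ≤ cellIndex q k x := Int.floor_nonneg.2 (div_nonneg x.2.1 mesh_pos.le)
  rw [Finset.mem_Ico, and_iff_right hnonneg, cellIndex, Int.floor_lt, Int.cast_natCast,
    div_lt_iff₀ mesh_pos, mul_mesh]

lemma isSparselyAmbiguousCoding_cellIndex {m : ℕ}
    (hret : ∀ t ∈ Icc 1 m, ∀ x ∈ Ico 0 ((2 : ℝ)⁻¹ ^ k), (2 : ℝ)⁻¹ ^ k ≤ (rotOdo q π)^[t] x) :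
    IsSparselyAmbiguousCoding (rotOdoSub q π) (cellIndex q k) (Finset.Ico 0 q) m where
  step x y hxy := by
    simp only [cellIndex_mem_Ico_iff]
    simp only [cellIndex, (semiconj_coe_rotOdoSub π).eq]
    exact floor_vnk_div_mesh_eq_or (mapsTo_rotPerm π x.2) (mapsTo_rotPerm π y.2)
      (floor_rotPerm_div_mesh_eq π x.2 hxy)
  no_return x hx t ht := by
    rw [cellIndex_mem_Ico_iff] at hx ⊢
    rw [((semiconj_coe_rotOdoSub π).iterate_right t).eq]
    exact not_lt.2 (hret t ht x ⟨x.2.1, hx⟩)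

lemma dist_lt_of_mem_sameSymbol_cellIndex {x y : Ico (0 : ℝ) 1}
    (hxy : (x, y) ∈ sameSymbol (cellIndex q k)) : dist x y < (2 : ℝ)⁻¹ ^ k :=
  (abs_sub_lt_of_floor_div_eq mesh_pos hxy).trans_le mesh_le

end RotatedOdometer

/-- the topological entropy (Bowen–Dinaburg cover entropy over the whole space)
of the rotated odometer `F_π : [0,1) → [0,1)` is `0`. -/
theorem rotOdo_coverEntropy_eq_zero (q : ℕ) (hq : 2 ≤ q) (π : Equiv.Perm (Fin q)) :
    Dynamics.coverEntropy (rotOdoSub q π) Set.univ = 0 := by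
  have : NeZero q := ⟨by omega⟩
  have : Nonempty (Set.Ico (0 : ℝ) 1) := ⟨0, by simp⟩
  refine RotatedOdometer.coverEntropy_univ_eq_zero_of_codings (ι := ℤ) (N := q) fun U hU m => ?_
  obtain ⟨ε, hε, hεU⟩ := Metric.mem_uniformity_dist.1 hU
  obtain ⟨k, hkε, hret⟩ := RotatedOdometer.exists_two_inv_pow_lt_and_no_return π hε m
  exact ⟨RotatedOdometer.cellIndex q k, Finset.Ico 0 q, by simp,
    RotatedOdometer.finite_range_cellIndex,
    RotatedOdometer.isSparselyAmbiguousCoding_cellIndex π hret,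
    fun _ hxy => hεU ((RotatedOdometer.dist_lt_of_mem_sameSymbol_cellIndex hxy).trans hkε)⟩
end

section
/- Let q ≥ 2 and π be a permutation of {0,…,q−1}, and let F_π be the rotated odometer. The set of Borel probability measures μ on [0,1) that are F_π-invariant, ergodic for F_π, and satisfy μ(I_per) = 0 (i.e. are carried by the aperiodic part) is finite, of cardinality at most q. -/
open MeasureTheory in
/-- The set of Borel probability measures on `[0,1)` (i.e. probability measures on `ℝ` giving
zero mass to the complement of `[0,1)`) that are `F_π`-invariant, ergodic, and carried by the
aperiodic part (give zero mass to the set of periodic points). -/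
noncomputable def ergAperiodicMeasures (q : ℕ) (π : Equiv.Perm (Fin q)) :
    Set (Measure ℝ) :=
  {μ | IsProbabilityMeasure μ ∧ μ (Set.Ico (0 : ℝ) 1)ᶜ = 0 ∧
    (∀ A : Set ℝ, MeasurableSet A → μ (rotOdo q π ⁻¹' A) = μ A) ∧
    (∀ A : Set ℝ, MeasurableSet A → rotOdo q π ⁻¹' A = A → μ A = 0 ∨ μ A = 1) ∧
    μ {x ∈ Set.Ico (0 : ℝ) 1 | ∃ n : ℕ, 1 ≤ n ∧ (rotOdo q π)^[n] x = x} = 0}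

/-!
Signed measures that are invariant under the rotated odometer `F` and carried by its aperiodic part
form a real vector space in which distinct ergodic probability measures are mutually singular, hence
linearly independent. It remains to bound the dimension of that space by `q`.

Cut `[0, 1)` into `q * 2 ^ n` cells of equal length. The map `F` translates every cell onto a cell,
except the `q` cells that `R_π` sends into `[1 - 2⁻ⁿ, 1)`. A cell whose forward orbit avoids the
exceptional cells consists of periodic points, and any other cell reaches an exceptional one
without changing its mass. Therefore an invariant signed measure on the aperiodic part vanishes on
all cells of level `n` as soon as it vanishes on `q` of them. The measures that vanish on all cells
of level `n` decrease to `0` as `n` grows, so on a finite-dimensional subspace the `q` evaluations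
of some level are jointly injective.
-/

open MeasureTheory Set Function

section LinearAlgebra

lemma exists_disjoint_of_antitone {R M : Type*} [Ring R] [AddCommGroup M] [Module R M]
    {K : ℕ → Submodule R M} (hK : Antitone K) {U : Submodule R M} [IsArtinian R U]
    (hU : Disjoint U (⨅ n, K n)) : ∃ n, Disjoint U (K n) := by
  obtain ⟨n, hn⟩ := IsArtinian.monotone_stabilizes
    ⟨fun n => OrderDual.toDual ((K n).comap U.subtype),
      fun _ _ h => Submodule.comap_mono (hK h)⟩
  refine ⟨n, Submodule.disjoint_def.2 fun x hxU hxn => ?_⟩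
  refine Submodule.disjoint_def.1 hU x hxU ((Submodule.mem_iInf K).2 fun m => ?_)
  rcases le_total n m with h | h
  · have heq : (K n).comap U.subtype = (K m).comap U.subtype := hn m h
    exact heq.le (show (⟨x, hxU⟩ : U) ∈ (K n).comap U.subtype from hxn)
  · exact hK h hxn

lemma rank_le_finrank_of_inf_ker_le_antitone {k V W : Type*} [DivisionRing k] [AddCommGroup V]
    [Module k V] [AddCommGroup W] [Module k W] [FiniteDimensional k W] {S : Submodule k V}
    {K : ℕ → Submodule k V} (hK : Antitone K) (hS : Disjoint S (⨅ n, K n)) (f : ℕ → V →ₗ[k] W)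
    (hf : ∀ n, S ⊓ LinearMap.ker (f n) ≤ K n) : Module.rank k S ≤ Module.finrank k W := by
  refine rank_le fun s hs => ?_
  have hsV : LinearIndependent k fun x : s => ((x : S) : V) := hs.map' S.subtype S.ker_subtype
  have hUS : Submodule.span k (range fun x : s => ((x : S) : V)) ≤ S :=
    Submodule.span_le.2 (range_subset_iff.2 fun x => (x : S).2)
  have := isArtinian_span_of_finite k (finite_range fun x : s => ((x : S) : V))
  obtain ⟨n, hn⟩ := exists_disjoint_of_antitone hK (hS.mono_left hUS)
  have hker : Disjoint (Submodule.span k (range fun x : s => ((x : S) : V)))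
      (LinearMap.ker (f n)) := Submodule.disjoint_def.2 fun x hxU hx =>
    Submodule.disjoint_def.1 hn x hxU (hf n ⟨hUS hxU, hx⟩)
  simpa using (hsV.map hker).fintype_card_le_finrank

end LinearAlgebra

section Measure

variable {α : Type*} [MeasurableSpace α]

lemma measurable_of_eqOn_iUnion {β ι : Type*} [MeasurableSpace β] [Countable ι] {s : ι → Set α}
    (hs : ∀ i, MeasurableSet (s i)) (hcover : ⋃ i, s i = univ) {f : α → β} {g : ι → α → β}
    (hg : ∀ i, Measurable (g i)) (hfg : ∀ i, EqOn f (g i) (s i)) : Measurable f := by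
  intro A hA
  have hpre : f ⁻¹' A = ⋃ i, s i ∩ g i ⁻¹' A := by
    rw [← univ_inter (f ⁻¹' A), ← hcover, iUnion_inter]
    exact iUnion_congr fun i => (hfg i).inter_preimage_eq A
  rw [hpre]
  exact .iUnion fun i => (hs i).inter (hg i hA)

lemma mutuallySingular_of_ergodic_of_ne {f : α → α} {μ ν : Measure α} [IsProbabilityMeasure μ]
    [IsProbabilityMeasure ν] (hμ : Ergodic f μ) (hν : Ergodic f ν) (hne : μ ≠ ν) : μ ⟂ₘ ν := by
  obtain ⟨c, hc⟩ := hμ.eq_smul_of_absolutelyContinuous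
    (hμ.toMeasurePreserving.singularPart hν.toMeasurePreserving)
    (Measure.absolutelyContinuous_of_le (Measure.singularPart_le μ ν))
  rcases eq_or_ne c 0 with rfl | hc0
  · rw [zero_smul, Measure.singularPart_eq_zero] at hc
    exact absurd (hν.eq_of_absolutelyContinuous hμ.toMeasurePreserving hc) hne
  · exact (Measure.mutuallySingular_singularPart μ ν).mono_ac
      (hc ▸ Measure.absolutelyContinuous_smul hc0) .rfl

lemma linearIndependent_toSignedMeasure {ι : Type*} {μ : ι → Measure α}
    [∀ i, IsFiniteMeasure (μ i)] (hμ : ∀ i, μ i ≠ 0)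
    (hsing : Pairwise fun i j => μ i ⟂ₘ μ j) :
    LinearIndependent ℝ fun i => (μ i).toSignedMeasure := by
  classical
  refine linearIndependent_iff'.2 fun s c hc i hi => ?_
  have hsum : μ i ⟂ₘ Measure.sum fun j : {j // j ∈ s ∧ j ≠ i} => μ j :=
    have : Countable {j // j ∈ s ∧ j ≠ i} :=
      (s.finite_toSet.subset fun _ h => h.1 : {j | j ∈ s ∧ j ≠ i}.Finite).countable
    Measure.MutuallySingular.sum_right.2 fun j => hsing j.2.2.symm
  obtain ⟨A, hA, hiA, hjA⟩ := hsum
  have hj : ∀ j ∈ s, j ≠ i → μ j Aᶜ = 0 := fun j hjs hji =>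
    (Measure.sum_apply_eq_zero' hA.compl).1 hjA ⟨j, hjs, hji⟩
  have hμi : (μ i).real Aᶜ ≠ 0 := by
    intro h0
    refine hμ i (Measure.measure_univ_eq_zero.1 ?_)
    rw [← union_compl_self A]
    exact measure_union_null hiA ((measureReal_eq_zero_iff).1 h0)
  have heval : (∑ j ∈ s, c j • (μ j).toSignedMeasure) Aᶜ = c i * (μ i).real Aᶜ := by
    have hterm : ∀ j, (c j • (μ j).toSignedMeasure) Aᶜ = c j * (μ j).real Aᶜ := fun j => by
      simp [Measure.toSignedMeasure_apply_measurable hA.compl]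
    rw [← FunLike.coeAddMonoidHom_apply, map_sum, Finset.sum_apply]
    simp only [FunLike.coeAddMonoidHom_apply, hterm]
    refine Finset.sum_eq_single_of_mem i hi fun j hjs hji => ?_
    rw [(measureReal_eq_zero_iff).2 (hj j hjs hji), mul_zero]
  rw [hc] at heval
  simpa [hμi] using heval.symm

/-- The signed measures that vanish on each set of the family `C`. -/
def vanishingOn (C : Set (Set α)) : Submodule ℝ (SignedMeasure α) where
  carrier := {σ | ∀ A ∈ C, σ A = 0}
  zero_mem' _ _ := rfl
  add_mem' hσ hτ A hA := by simp [hσ A hA, hτ A hA]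
  smul_mem' c σ hσ A hA := by simp [hσ A hA]

/-- The signed measures invariant under `T`. -/
def invariantSignedMeasures (T : α → α) : Submodule ℝ (SignedMeasure α) where
  carrier := {σ | ∀ A, MeasurableSet A → σ (T ⁻¹' A) = σ A}
  zero_mem' _ _ := rfl
  add_mem' hσ hτ A hA := by simp [hσ A hA, hτ A hA]
  smul_mem' c σ hσ A hA := by simp [hσ A hA]

end Measure

lemma subset_periodicPts_of_finite {α : Type*} {f : α → α} {s : Set α} (hs : s.Finite)
    (hmaps : MapsTo f s s) (hinj : InjOn f s) : s ⊆ periodicPts f := by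
  intro x hx
  have := hs.to_subtype
  obtain ⟨n, hn, hper⟩ := (hmaps.restrict_inj.2 hinj).mem_periodicPts ⟨x, hx⟩
  refine ⟨n, hn, ?_⟩
  rw [IsPeriodicPt, IsFixedPt, ← MapsTo.coe_iterate_restrict hmaps ⟨x, hx⟩, hper.eq]

namespace RotOdo

variable {q n m : ℕ}

/-- The index of the interval `[k / (q * 2 ^ n), (k + 1) / (q * 2 ^ n))` that contains `x`. -/
noncomputable def gridCode (q n : ℕ) (x : ℝ) : ℤ := ⌊(q : ℝ) * 2 ^ n * x⌋

/-- The `k`-th cell of the partition of `[0, 1)` into `q * 2 ^ n` intervals of equal length, empty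
unless `0 ≤ k < q * 2 ^ n`. -/
def cell (q n : ℕ) (k : ℤ) : Set ℝ := Ico 0 1 ∩ gridCode q n ⁻¹' {k}

section Grid

lemma measurable_gridCode (q n : ℕ) : Measurable (gridCode q n) :=
  (measurable_const_mul _).floor

lemma measurableSet_cell (q n : ℕ) (k : ℤ) : MeasurableSet (cell q n k) :=
  measurableSet_Ico.inter (measurable_gridCode q n (measurableSet_singleton k))

lemma gridCode_eq_ediv (hmn : m ≤ n) (x : ℝ) :
    gridCode q m x = gridCode q n x / 2 ^ (n - m) := by
  have h := Int.floor_div_natCast ((q : ℝ) * 2 ^ n * x) (2 ^ (n - m))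
  push_cast at h
  rw [gridCode, gridCode, ← h, ← Nat.sub_add_cancel hmn, pow_add, Nat.add_sub_cancel]
  congr 1
  field_simp

lemma gridCode_add {s : ℝ} {t : ℤ} (hs : (q : ℝ) * 2 ^ n * s = t) (x : ℝ) :
    gridCode q n (x + s) = gridCode q n x + t := by
  rw [gridCode, mul_add, hs, Int.floor_add_intCast, gridCode]

variable [NeZero q]

lemma mul_inv_two_pow_le_iff (j : ℤ) {x : ℝ} :
    (j : ℝ) * 2⁻¹ ^ n ≤ x ↔ (q : ℤ) * j ≤ gridCode q n x := by
  have hq : (0 : ℝ) < q := Nat.cast_pos.2 (NeZero.pos q)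
  rw [gridCode, Int.le_floor, inv_pow, ← div_eq_mul_inv, div_le_iff₀' (by positivity)]
  push_cast
  rw [mul_assoc, mul_le_mul_iff_right₀ hq]

lemma lt_mul_inv_two_pow_iff (j : ℤ) {x : ℝ} :
    x < (j : ℝ) * 2⁻¹ ^ n ↔ gridCode q n x < q * j := by
  rw [← not_le, ← not_le, mul_inv_two_pow_le_iff (q := q)]

lemma lt_one_sub_inv_two_pow_iff {x : ℝ} :
    x < 1 - 2⁻¹ ^ n ↔ gridCode q n x < q * (2 ^ n - 1) := by
  rw [← lt_mul_inv_two_pow_iff (q := q)]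
  push_cast
  rw [sub_one_mul, ← mul_pow, mul_inv_cancel₀ two_ne_zero, one_pow]

lemma mem_Ico_zero_one_iff {x : ℝ} :
    x ∈ Ico (0 : ℝ) 1 ↔ gridCode q n x ∈ Ico (0 : ℤ) (q * 2 ^ n) := by
  have h0 := mul_inv_two_pow_le_iff (q := q) (n := n) 0 (x := x)
  have h1 := lt_mul_inv_two_pow_iff (q := q) (n := n) (2 ^ n) (x := x)
  push_cast at h0 h1
  rw [← mul_pow, mul_inv_cancel₀ two_ne_zero, one_pow] at h1
  rw [zero_mul, mul_zero] at h0
  rw [mem_Ico, mem_Ico, h0, h1]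

lemma eq_of_gridCode_eq_of_fract_eq {x y : ℝ} (hcode : gridCode q n x = gridCode q n y)
    (hfract : Int.fract ((q : ℝ) * 2 ^ n * x) = Int.fract ((q : ℝ) * 2 ^ n * y)) : x = y := by
  have hq : (q : ℝ) * 2 ^ n ≠ 0 := mul_ne_zero (NeZero.ne _) (by positivity)
  refine mul_left_cancel₀ hq ?_
  rw [← Int.floor_add_fract ((q : ℝ) * 2 ^ n * x), ← Int.floor_add_fract ((q : ℝ) * 2 ^ n * y),
    hfract]
  exact congrArg (fun k : ℤ => (k : ℝ) + _) hcode

variable (q n) in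
lemma finite_Ico_inter_setOf_fract_eq (r : ℝ) :
    (Ico (0 : ℝ) 1 ∩ {x | Int.fract ((q : ℝ) * 2 ^ n * x) = r}).Finite :=
  Finite.of_injOn (fun _ hx => mem_Ico_zero_one_iff.1 hx.1)
    (fun _ hx _ hy hxy => eq_of_gridCode_eq_of_fract_eq hxy (hx.2.trans hy.2.symm))
    (finite_Ico (0 : ℤ) (q * 2 ^ n))

end Grid

section GridMeasure

variable {σ : SignedMeasure ℝ}

lemma apply_preimage_gridCode_eq_zero (hσ : σ ∈ vanishingOn (range (cell q n))) (S : Set ℤ) :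
    σ (Ico 0 1 ∩ gridCode q n ⁻¹' S) = 0 := by
  have hS : Ico 0 1 ∩ gridCode q n ⁻¹' S = ⋃ k : S, cell q n k := by
    ext x
    simp [cell]
  have hdisj : Pairwise (Disjoint on fun k : S => cell q n k) := fun k l hkl =>
    ((disjoint_singleton.2 (Subtype.coe_ne_coe.2 hkl)).preimage _).mono inter_subset_right
      inter_subset_right
  rw [hS, σ.of_disjoint_iUnion (fun _ => measurableSet_cell q n _) hdisj]
  simp [fun k : S => hσ _ (mem_range_self (k : ℤ))]

lemma antitone_vanishingOn_cell (q : ℕ) :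
    Antitone fun n => vanishingOn (range (cell q n)) := by
  rintro m n hmn σ hσ _ ⟨k, rfl⟩
  have hk : cell q m k = Ico 0 1 ∩ gridCode q n ⁻¹' {j | j / 2 ^ (n - m) = k} := by
    ext x
    simp [cell, gridCode_eq_ediv hmn]
  rw [hk]
  exact apply_preimage_gridCode_eq_zero hσ _

/-- The dyadic rationals. -/
def dyadics : Set ℝ := {x | ∃ (n : ℕ) (j : ℤ), x = j * 2⁻¹ ^ n}

lemma dense_dyadics : Dense dyadics := by
  refine dense_of_exists_between fun a b hab => ?_
  obtain ⟨n, hn⟩ := exists_pow_lt_of_lt_one (sub_pos.2 hab) (by norm_num : (2⁻¹ : ℝ) < 1)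
  have hpos : (0 : ℝ) < 2⁻¹ ^ n := by positivity
  refine ⟨(⌊a / 2⁻¹ ^ n⌋ + 1 : ℤ) * 2⁻¹ ^ n, ⟨n, _, rfl⟩, ?_, ?_⟩
  · rw [← div_lt_iff₀ hpos]
    push_cast
    exact Int.lt_floor_add_one _
  · have := (le_div_iff₀ hpos).1 (Int.floor_le (a / 2⁻¹ ^ n))
    push_cast
    linarith

lemma exists_Ico_eq_preimage_gridCode [NeZero q] {l u : ℝ} (hl : l ∈ dyadics)
    (hu : u ∈ dyadics) : ∃ n S, Ico l u = gridCode q n ⁻¹' S := by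
  obtain ⟨m, i, rfl⟩ := hl
  obtain ⟨n, j, rfl⟩ := hu
  have hm : (i : ℝ) * 2⁻¹ ^ m = (i * 2 ^ n : ℤ) * 2⁻¹ ^ (m + n) := by
    push_cast
    rw [pow_add, inv_pow, inv_pow]
    field_simp
  have hn : (j : ℝ) * 2⁻¹ ^ n = (j * 2 ^ m : ℤ) * 2⁻¹ ^ (m + n) := by
    push_cast
    rw [pow_add, inv_pow, inv_pow]
    field_simp
  refine ⟨m + n, Ico (q * (i * 2 ^ n)) (q * (j * 2 ^ m)), ?_⟩
  ext x
  rw [hm, hn, mem_Ico, mul_inv_two_pow_le_iff (q := q), lt_mul_inv_two_pow_iff (q := q)]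
  rfl

lemma apply_eq_apply_Ico_inter (hI : σ ∈ vanishingOn (𝒫 (Ico 0 1)ᶜ)) {A : Set ℝ}
    (hA : MeasurableSet A) : σ A = σ (Ico 0 1 ∩ A) := by
  have hout : σ (A \ (Ico 0 1 ∩ A)) = 0 := hI _ fun _ hx hxI => hx.2 ⟨hxI, hx.1⟩
  rw [← σ.of_add_of_sdiff (measurableSet_Ico.inter hA) hA inter_subset_right, hout, add_zero]

lemma eq_zero_of_forall_mem_vanishingOn_cell [NeZero q]
    (hI : σ ∈ vanishingOn (𝒫 (Ico 0 1)ᶜ)) (hcell : ∀ n, σ ∈ vanishingOn (range (cell q n))) :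
    σ = 0 := by
  refine VectorMeasure.ext_of_generateFrom _ ?_
    ((BorelSpace.measurable_eq (α := ℝ)).trans dense_dyadics.borel_eq_generateFrom_Ico_mem)
    (isPiSystem_Ico_mem dyadics dyadics) ?_
  · rintro _ ⟨l, hl, u, hu, -, rfl⟩
    obtain ⟨n, S, hS⟩ := exists_Ico_eq_preimage_gridCode (q := q) hl hu
    rw [apply_eq_apply_Ico_inter hI measurableSet_Ico, hS,
      apply_preimage_gridCode_eq_zero (hcell n)]
    rfl
  · rw [apply_eq_apply_Ico_inter hI .univ, ← preimage_univ (f := gridCode q 0),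
      apply_preimage_gridCode_eq_zero (hcell 0)]
    rfl

end GridMeasure

section Translation

variable {x y s : ℝ} {t : ℤ}

lemma fract_mul_add (hs : (q : ℝ) * 2 ^ n * s = t) (x : ℝ) :
    Int.fract ((q : ℝ) * 2 ^ n * (x + s)) = Int.fract ((q : ℝ) * 2 ^ n * x) := by
  rw [mul_add, hs, Int.fract_add_intCast]

lemma gridCode_add_eq_iff (hs : (q : ℝ) * 2 ^ n * s = t) :
    gridCode q n (x + s) = gridCode q n (y + s) ↔ gridCode q n x = gridCode q n y := by
  rw [gridCode_add hs, gridCode_add hs, add_left_inj]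

lemma gridCode_eq_of_le (hmn : m ≤ n) (h : gridCode q n x = gridCode q n y) :
    gridCode q m x = gridCode q m y := by
  rw [gridCode_eq_ediv hmn, gridCode_eq_ediv hmn, h]

end Translation

section Odometer

variable {x y : ℝ}

/-- The levels `n` with `x < 1 - 2⁻ⁿ`. For `x ∈ [0, 1)` the least of them is the index of the piece
of the von Neumann–Kakutani map that contains `x`. -/
def vnkLevels (x : ℝ) : Set ℕ := {n | x < 1 - 2⁻¹ ^ n}

lemma exists_isLeast_vnkLevels (hx : x < 1) :
    ∃ m, IsLeast (vnkLevels x) m := by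
  obtain ⟨n, hn⟩ := exists_pow_lt_of_lt_one (sub_pos.2 hx) (by norm_num : (2⁻¹ : ℝ) < 1)
  exact ⟨_, Nat.sInf_mem ⟨n, show x < 1 - 2⁻¹ ^ n by linarith⟩, fun _ => Nat.sInf_le⟩

lemma vnk_eq (h : IsLeast (vnkLevels x) m) : vnk x = x - 1 + 3 * 2⁻¹ ^ m := by
  classical
  have hex : ∃ n : ℕ, x < 1 - 2⁻¹ ^ n := ⟨m, h.1⟩
  have hfind : Nat.find hex = m :=
    (Nat.find_eq_iff hex).2 ⟨h.1, fun k hk hxk => (h.2 hxk).not_gt hk⟩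
  rw [vnk, dif_pos hex, hfind]

lemma one_sub_two_mul_le_of_isLeast (hx : 0 ≤ x) (h : IsLeast (vnkLevels x) m) :
    1 - 2 * 2⁻¹ ^ m ≤ x := by
  rcases m with - | k
  · simpa using (by norm_num : (1 - 2 : ℝ) ≤ 0).trans hx
  · by_contra! hlt
    rw [pow_succ', mul_inv_cancel_left₀ two_ne_zero] at hlt
    exact (h.2 hlt).not_gt k.lt_succ_self

lemma vnk_mem_Ico (hx : 0 ≤ x) (h : IsLeast (vnkLevels x) m) :
    vnk x ∈ Ico (2⁻¹ ^ m) (2 * 2⁻¹ ^ m) := by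
  have hm : x < 1 - 2⁻¹ ^ m := h.1
  have := one_sub_two_mul_le_of_isLeast hx h
  rw [vnk_eq h]
  constructor <;> linarith

lemma inv_two_pow_le_vnk_iff (hx : x ∈ Ico (0 : ℝ) 1) : 2⁻¹ ^ n ≤ vnk x ↔ x < 1 - 2⁻¹ ^ n := by
  obtain ⟨m, hm⟩ := exists_isLeast_vnkLevels hx.2
  have hv := vnk_mem_Ico hx.1 hm
  have hanti : Antitone fun k : ℕ => (2⁻¹ : ℝ) ^ k :=
    pow_right_anti₀ (by norm_num) (by norm_num)
  rcases le_or_gt m n with hmn | hnm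
  · have hxm : x < 1 - 2⁻¹ ^ m := hm.1
    exact iff_of_true ((hanti hmn).trans hv.1) (hxm.trans_le (sub_le_sub_left (hanti hmn) 1))
  · refine iff_of_false (not_le.2 (hv.2.trans_le ?_)) fun hxn => (hm.2 hxn).not_gt hnm
    calc (2 : ℝ) * 2⁻¹ ^ m ≤ 2 * 2⁻¹ ^ (n + 1) := mul_le_mul_of_nonneg_left (hanti hnm) two_pos.le
      _ = 2⁻¹ ^ n := by rw [pow_succ', mul_inv_cancel_left₀ two_ne_zero]

lemma vnk_mapsTo : MapsTo vnk (Ico 0 1) (Ico 0 1) := by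
  intro x hx
  obtain ⟨m, hm⟩ := exists_isLeast_vnkLevels hx.2
  refine ⟨le_trans (by positivity) (vnk_mem_Ico hx.1 hm).1, not_le.1 fun h1 => ?_⟩
  have h0 : x < 1 - 2⁻¹ ^ 0 := (inv_two_pow_le_vnk_iff hx).1 (by simpa using h1)
  exact absurd hx.1 (not_le.2 (by simpa using h0))

lemma measurableSet_isLeast_vnkLevels (m : ℕ) :
    MeasurableSet {x : ℝ | IsLeast (vnkLevels x) m} := by
  have hset : {x : ℝ | IsLeast (vnkLevels x) m} =
      Iio (1 - 2⁻¹ ^ m) ∩ ⋂ k < m, Ici (1 - 2⁻¹ ^ k) := by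
    ext x
    simp only [IsLeast, mem_lowerBounds, mem_inter_iff, mem_Iio, mem_iInter, mem_Ici]
    exact and_congr_right fun _ => forall_congr' fun k =>
      ⟨fun h hk => not_lt.1 fun hx => (h hx).not_gt hk,
        fun h hx => not_lt.1 fun hk => (h hk).not_gt hx⟩
  rw [hset]
  exact measurableSet_Iio.inter (.biInter (to_countable _) fun _ _ => measurableSet_Ici)

lemma measurable_vnk : Measurable vnk := by
  refine measurable_of_eqOn_iUnion
    (s := fun o : Option ℕ => o.elim (Ici 1) fun m => {x | IsLeast (vnkLevels x) m})
    (g := fun o x => o.elim 0 fun m => x - 1 + 3 * 2⁻¹ ^ m) ?_ ?_ ?_ ?_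
  · rintro (- | m)
    exacts [measurableSet_Ici, measurableSet_isLeast_vnkLevels m]
  · refine eq_univ_of_forall fun x => mem_iUnion.2 ?_
    rcases le_or_gt 1 x with hx | hx
    · exact ⟨none, hx⟩
    · obtain ⟨m, hm⟩ := exists_isLeast_vnkLevels hx
      exact ⟨some m, hm⟩
  · rintro (- | m)
    exacts [measurable_const, (measurable_id.sub_const 1).add_const _]
  · rintro (- | m) x hx
    · refine dif_neg fun ⟨n, hn⟩ => ?_
      have hx1 : 1 ≤ x := hx
      have : (0 : ℝ) < 2⁻¹ ^ n := by positivity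
      linarith
    · exact vnk_eq hx

lemma exists_vnk_eq_add (q : ℕ) (hx : x < 1 - 2⁻¹ ^ n) : ∃ (s : ℝ) (t : ℤ),
    (q : ℝ) * 2 ^ n * s = t ∧
      ∀ y, (∀ k ≤ n, y < 1 - 2⁻¹ ^ k ↔ x < 1 - 2⁻¹ ^ k) → vnk y = y + s := by
  have hx1 : x < 1 := hx.trans_le (sub_le_self 1 (by positivity))
  obtain ⟨m, hm⟩ := exists_isLeast_vnkLevels hx1
  have hmn : m ≤ n := hm.2 hx
  refine ⟨-1 + 3 * 2⁻¹ ^ m, q * (-2 ^ n + 3 * 2 ^ (n - m)), ?_, fun y hy => ?_⟩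
  · obtain ⟨d, rfl⟩ := Nat.exists_eq_add_of_le hmn
    rw [Nat.add_sub_cancel_left, pow_add, inv_pow]
    push_cast
    field_simp
    ring
  · have hym : IsLeast (vnkLevels y) m := by
      refine ⟨(hy m hmn).2 hm.1, fun k hk => ?_⟩
      rcases le_total k n with hkn | hnk
      exacts [hm.2 ((hy k hkn).1 hk), hmn.trans hnk]
    rw [vnk_eq hym]
    ring

lemma fract_vnk (q : ℕ) (hx : x < 1 - 2⁻¹ ^ n) :
    Int.fract ((q : ℝ) * 2 ^ n * vnk x) = Int.fract ((q : ℝ) * 2 ^ n * x) := by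
  obtain ⟨s, t, hs, hvnk⟩ := exists_vnk_eq_add q hx
  rw [hvnk x fun _ _ => Iff.rfl, fract_mul_add hs]

lemma gridCode_vnk_eq_iff [NeZero q] (hx : x ∈ Ico (0 : ℝ) 1) (hy : y ∈ Ico (0 : ℝ) 1)
    (hxn : x < 1 - 2⁻¹ ^ n) :
    gridCode q n (vnk x) = gridCode q n (vnk y) ↔ gridCode q n x = gridCode q n y := by
  obtain ⟨s, t, hs, hvnk⟩ := exists_vnk_eq_add q hxn
  have heq : (∀ k ≤ n, y < 1 - 2⁻¹ ^ k ↔ x < 1 - 2⁻¹ ^ k) →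
      (gridCode q n (vnk x) = gridCode q n (vnk y) ↔ gridCode q n x = gridCode q n y) :=
    fun h => by rw [hvnk x fun _ _ => Iff.rfl, hvnk y h, gridCode_add_eq_iff hs]
  refine ⟨fun h => (heq fun k hk => ?_).1 h, fun h => (heq fun k hk => ?_).2 h⟩
  · have hpow : ∀ z : ℝ, 2⁻¹ ^ k ≤ z ↔ (q : ℤ) * 1 ≤ gridCode q k z := fun z => by
      rw [← mul_inv_two_pow_le_iff, Int.cast_one, one_mul]
    rw [← inv_two_pow_le_vnk_iff hx, ← inv_two_pow_le_vnk_iff hy, hpow, hpow,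
      gridCode_eq_of_le hk h]
  · rw [lt_one_sub_inv_two_pow_iff (q := q), lt_one_sub_inv_two_pow_iff (q := q),
      gridCode_eq_of_le hk h]

end Odometer

section IntervalExchange

variable [NeZero q] {π : Equiv.Perm (Fin q)} {x y : ℝ}

lemma mem_Ico_div_iff {i : ℕ} :
    x ∈ Ico ((i : ℝ) / q) (((i : ℝ) + 1) / q) ↔ gridCode q 0 x = i := by
  have hq : (0 : ℝ) < q := Nat.cast_pos.2 (NeZero.pos q)
  rw [gridCode, pow_zero, mul_one, Int.floor_eq_iff, mem_Ico, div_le_iff₀' hq, lt_div_iff₀' hq,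
    Int.cast_natCast]

lemma rotPerm_eq {i : Fin q} (hi : gridCode q 0 x = (i : ℕ)) :
    rotPerm q π x = x + (((π i : ℕ) : ℝ) - (i : ℕ)) / q := by
  have hex : ∃ i : Fin q, x ∈ Ico (((i : ℕ) : ℝ) / q) ((((i : ℕ) : ℝ) + 1) / q) :=
    ⟨i, mem_Ico_div_iff.2 hi⟩
  have hchoose : hex.choose = i := by
    have := (mem_Ico_div_iff.1 hex.choose_spec).symm.trans hi
    exact Fin.ext (by exact_mod_cast this)
  rw [rotPerm, dif_pos hex, hchoose]

lemma rotPerm_eq_self (hx : ∀ i : Fin q, gridCode q 0 x ≠ (i : ℕ)) : rotPerm q π x = x :=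
  dif_neg fun ⟨i, hi⟩ => hx i (mem_Ico_div_iff.1 hi)

lemma measurable_rotPerm (π : Equiv.Perm (Fin q)) : Measurable (rotPerm q π) := by
  have htrans : ∀ k : ℤ, ∃ s : ℝ, ∀ x, gridCode q 0 x = k → rotPerm q π x = x + s := fun k => by
    by_cases hk : ∃ i : Fin q, k = (i : ℕ)
    · obtain ⟨i, rfl⟩ := hk
      exact ⟨_, fun x => rotPerm_eq⟩
    · push Not at hk
      exact ⟨0, fun x hx => by rw [rotPerm_eq_self (hx ▸ hk), add_zero]⟩
  choose s hs using htrans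
  exact measurable_of_eqOn_iUnion (fun k => measurable_gridCode q 0 (measurableSet_singleton k))
    (by rw [← preimage_iUnion, iUnion_of_singleton, preimage_univ])
    (fun k => measurable_id.add_const (s k)) hs

variable (q) in
lemma exists_gridCode_zero_eq (hx : x ∈ Ico (0 : ℝ) 1) : ∃ i : Fin q, gridCode q 0 x = (i : ℕ) := by
  obtain ⟨h0, h1⟩ := (mem_Ico_zero_one_iff (q := q) (n := 0)).1 hx
  rw [pow_zero, mul_one] at h1
  exact ⟨⟨(gridCode q 0 x).toNat, by omega⟩, (Int.toNat_of_nonneg h0).symm⟩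

lemma mul_two_pow_mul_sub_div (i j : ℕ) :
    (q : ℝ) * 2 ^ n * (((j : ℝ) - i) / q) = (2 ^ n * ((j : ℤ) - i) : ℤ) := by
  have hq : (q : ℝ) ≠ 0 := NeZero.ne _
  push_cast
  field_simp

lemma gridCode_zero_rotPerm {i : Fin q} (hi : gridCode q 0 x = (i : ℕ)) :
    gridCode q 0 (rotPerm q π x) = (π i : ℕ) := by
  rw [rotPerm_eq hi, gridCode_add (mul_two_pow_mul_sub_div _ _), hi]
  ring

lemma rotPerm_mapsTo (π : Equiv.Perm (Fin q)) : MapsTo (rotPerm q π) (Ico 0 1) (Ico 0 1) := by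
  intro x hx
  obtain ⟨i, hi⟩ := exists_gridCode_zero_eq q hx
  rw [mem_Ico_zero_one_iff (q := q) (n := 0), gridCode_zero_rotPerm hi, pow_zero, mul_one]
  exact ⟨Nat.cast_nonneg _, Nat.cast_lt.2 (π i).2⟩

lemma fract_rotPerm (n : ℕ) (π : Equiv.Perm (Fin q)) (hx : x ∈ Ico (0 : ℝ) 1) :
    Int.fract ((q : ℝ) * 2 ^ n * rotPerm q π x) = Int.fract ((q : ℝ) * 2 ^ n * x) := by
  obtain ⟨i, hi⟩ := exists_gridCode_zero_eq q hx
  rw [rotPerm_eq hi, fract_mul_add (mul_two_pow_mul_sub_div _ _)]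

lemma gridCode_rotPerm_eq_iff (hx : x ∈ Ico (0 : ℝ) 1) (hy : y ∈ Ico (0 : ℝ) 1) :
    gridCode q n (rotPerm q π x) = gridCode q n (rotPerm q π y) ↔
      gridCode q n x = gridCode q n y := by
  obtain ⟨i, hi⟩ := exists_gridCode_zero_eq q hx
  obtain ⟨j, hj⟩ := exists_gridCode_zero_eq q hy
  by_cases hij : i = j
  · subst hij
    rw [rotPerm_eq hi, rotPerm_eq hj, gridCode_add_eq_iff (mul_two_pow_mul_sub_div _ _)]
  · refine iff_of_false (fun h => hij ?_) fun h => hij ?_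
    · have h0 := gridCode_eq_of_le n.zero_le h
      rw [gridCode_zero_rotPerm hi, gridCode_zero_rotPerm hj] at h0
      exact π.injective (Fin.ext (Nat.cast_injective h0))
    · have h0 := gridCode_eq_of_le n.zero_le h
      rw [hi, hj] at h0
      exact Fin.ext (Nat.cast_injective h0)

end IntervalExchange

section RotatedOdometer

/-- The signed measures carried by the points of `[0, 1)` that are not periodic for the rotated
odometer, and invariant under it. -/
noncomputable def aperiodicSignedMeasures (q : ℕ) (π : Equiv.Perm (Fin q)) :
    Submodule ℝ (SignedMeasure ℝ) :=
  invariantSignedMeasures (rotOdo q π) ⊓ vanishingOn (𝒫 ((Ico 0 1)ᶜ ∪ periodicPts (rotOdo q π)))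

lemma aperiodicSignedMeasures_le_vanishingOn_compl (π : Equiv.Perm (Fin q)) :
    aperiodicSignedMeasures q π ≤ vanishingOn (𝒫 (Ico 0 1)ᶜ) :=
  fun _ hσ A hA => hσ.2 A (hA.trans subset_union_left)

variable [NeZero q] {π : Equiv.Perm (Fin q)} {x y : ℝ}

lemma rotOdo_mapsTo (π : Equiv.Perm (Fin q)) : MapsTo (rotOdo q π) (Ico 0 1) (Ico 0 1) :=
  vnk_mapsTo.comp (rotPerm_mapsTo π)

lemma measurable_rotOdo (π : Equiv.Perm (Fin q)) : Measurable (rotOdo q π) :=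
  measurable_vnk.comp (measurable_rotPerm π)

/-- The points of `[0, 1)` whose image under `R_π` avoids `[1 - 2⁻ⁿ, 1)`. The rotated odometer
translates the level-`n` cell of such a point onto another level-`n` cell. -/
def goodSet (q n : ℕ) (π : Equiv.Perm (Fin q)) : Set ℝ :=
  Ico 0 1 ∩ rotPerm q π ⁻¹' Iio (1 - 2⁻¹ ^ n)

lemma mem_goodSet_iff_of_gridCode_eq (h : gridCode q n x = gridCode q n y) :
    x ∈ goodSet q n π ↔ y ∈ goodSet q n π := by
  have hI : x ∈ Ico (0 : ℝ) 1 ↔ y ∈ Ico (0 : ℝ) 1 := by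
    rw [mem_Ico_zero_one_iff (q := q) (n := n), mem_Ico_zero_one_iff (q := q) (n := n), h]
  rw [goodSet, mem_inter_iff, mem_inter_iff, hI]
  refine and_congr_right fun hy => ?_
  rw [mem_preimage, mem_preimage, mem_Iio, mem_Iio, lt_one_sub_inv_two_pow_iff (q := q),
    lt_one_sub_inv_two_pow_iff (q := q), (gridCode_rotPerm_eq_iff (hI.2 hy) hy).2 h]

lemma fract_rotOdo (hx : x ∈ goodSet q n π) :
    Int.fract ((q : ℝ) * 2 ^ n * rotOdo q π x) = Int.fract ((q : ℝ) * 2 ^ n * x) :=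
  (fract_vnk q hx.2).trans (fract_rotPerm n π hx.1)

lemma gridCode_rotOdo_eq_iff (hx : x ∈ goodSet q n π) (hy : y ∈ Ico (0 : ℝ) 1) :
    gridCode q n (rotOdo q π x) = gridCode q n (rotOdo q π y) ↔
      gridCode q n x = gridCode q n y :=
  (gridCode_vnk_eq_iff (rotPerm_mapsTo π hx.1) (rotPerm_mapsTo π hy) hx.2).trans
    (gridCode_rotPerm_eq_iff hx.1 hy)

lemma Ico_inter_preimage_cell (hx : x ∈ goodSet q n π) :
    Ico 0 1 ∩ rotOdo q π ⁻¹' cell q n (gridCode q n (rotOdo q π x)) =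
      cell q n (gridCode q n x) := by
  ext y
  refine and_congr_right fun hy => ?_
  rw [mem_preimage, cell, mem_inter_iff, and_iff_right (rotOdo_mapsTo π hy)]
  exact eq_comm.trans ((gridCode_rotOdo_eq_iff hx hy).trans eq_comm)

lemma gridCode_iterate_rotOdo_eq (hx : ∀ k, (rotOdo q π)^[k] x ∈ goodSet q n π)
    (hy : y ∈ Ico (0 : ℝ) 1) (h : gridCode q n x = gridCode q n y) (k : ℕ) :
    gridCode q n ((rotOdo q π)^[k] x) = gridCode q n ((rotOdo q π)^[k] y) := by
  induction k with
  | zero => exact h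
  | succ k ih =>
    rw [iterate_succ_apply', iterate_succ_apply']
    exact (gridCode_rotOdo_eq_iff (hx k) ((rotOdo_mapsTo π).iterate k hy)).2 ih

lemma mem_periodicPts_of_forall_iterate_mem_goodSet
    (hx : ∀ k, (rotOdo q π)^[k] x ∈ goodSet q n π) : x ∈ periodicPts (rotOdo q π) := by
  let s := {y | (∀ k, (rotOdo q π)^[k] y ∈ goodSet q n π) ∧
    Int.fract ((q : ℝ) * 2 ^ n * y) = Int.fract ((q : ℝ) * 2 ^ n * x)}
  have hfin : s.Finite := (finite_Ico_inter_setOf_fract_eq q n _).subset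
    fun y hy => ⟨(hy.1 0).1, hy.2⟩
  have hmaps : MapsTo (rotOdo q π) s s := fun y hy =>
    ⟨fun k => hy.1 (k + 1), (fract_rotOdo (hy.1 0)).trans hy.2⟩
  have hinj : InjOn (rotOdo q π) s := fun y hy z hz hyz =>
    eq_of_gridCode_eq_of_fract_eq
      ((gridCode_rotOdo_eq_iff (hy.1 0) (hz.1 0).1).1 (congrArg _ hyz)) (hy.2.trans hz.2.symm)
  exact subset_periodicPts_of_finite hfin hmaps hinj ⟨hx, rfl⟩

lemma cell_subset_periodicPts (hx : ∀ k, (rotOdo q π)^[k] x ∈ goodSet q n π) :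
    cell q n (gridCode q n x) ⊆ periodicPts (rotOdo q π) := fun _ hy =>
  mem_periodicPts_of_forall_iterate_mem_goodSet fun k =>
    (mem_goodSet_iff_of_gridCode_eq (gridCode_iterate_rotOdo_eq hx hy.1 hy.2.symm k)).1 (hx k)

/-- The cells of level `n` on which `R_π` takes values in `[1 - 2⁻ⁿ, 1)`. There are `q` of them;
they are exactly the cells of level `n` outside `goodSet q n π`. -/
def badCell (n : ℕ) (π : Equiv.Perm (Fin q)) (b : Fin q) : Set ℝ :=
  Ico 0 1 ∩ {x | gridCode q n (rotPerm q π x) = q * (2 ^ n - 1) + (b : ℕ)}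

lemma exists_cell_eq_badCell (hx : x ∈ Ico (0 : ℝ) 1) (hbad : x ∉ goodSet q n π) :
    ∃ b, cell q n (gridCode q n x) = badCell n π b := by
  have hle : (q : ℤ) * (2 ^ n - 1) ≤ gridCode q n (rotPerm q π x) :=
    not_lt.1 fun h => hbad ⟨hx, lt_one_sub_inv_two_pow_iff.2 h⟩
  have hlt := (mem_Ico_zero_one_iff (q := q) (n := n).1 (rotPerm_mapsTo π hx)).2
  obtain ⟨b, hb⟩ := Int.eq_ofNat_of_zero_le (sub_nonneg.2 hle)
  refine ⟨⟨b, by zify; linarith⟩, ?_⟩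
  ext y
  refine and_congr_right fun hy => ?_
  rw [mem_preimage, mem_singleton_iff, ← gridCode_rotPerm_eq_iff (π := π) hy hx]
  exact Eq.congr_right (by linarith)

variable {σ : SignedMeasure ℝ}

lemma apply_cell_gridCode_rotOdo (hσ : σ ∈ aperiodicSignedMeasures q π)
    (hx : x ∈ goodSet q n π) :
    σ (cell q n (gridCode q n (rotOdo q π x))) = σ (cell q n (gridCode q n x)) := by
  have hC := measurableSet_cell q n (gridCode q n (rotOdo q π x))
  rw [← hσ.1 _ hC, apply_eq_apply_Ico_inter (aperiodicSignedMeasures_le_vanishingOn_compl π hσ)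
    (measurable_rotOdo π hC), Ico_inter_preimage_cell hx]

lemma apply_cell_eq_zero_of_iterate_notMem_goodSet (hσ : σ ∈ aperiodicSignedMeasures q π)
    (hbad : σ ∈ vanishingOn (range (badCell n π))) (k : ℕ) (hx : x ∈ Ico (0 : ℝ) 1)
    (hk : (rotOdo q π)^[k] x ∉ goodSet q n π) : σ (cell q n (gridCode q n x)) = 0 := by
  induction k generalizing x with
  | zero =>
    obtain ⟨b, hb⟩ := exists_cell_eq_badCell hx hk
    exact hb ▸ hbad _ ⟨b, rfl⟩
  | succ k ih =>
    by_cases hgood : x ∈ goodSet q n π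
    · rw [← apply_cell_gridCode_rotOdo hσ hgood]
      exact ih (rotOdo_mapsTo π hx) hk
    · obtain ⟨b, hb⟩ := exists_cell_eq_badCell hx hgood
      exact hb ▸ hbad _ ⟨b, rfl⟩

lemma mem_vanishingOn_cell (hσ : σ ∈ aperiodicSignedMeasures q π)
    (hbad : σ ∈ vanishingOn (range (badCell n π))) : σ ∈ vanishingOn (range (cell q n)) := by
  rintro _ ⟨c, rfl⟩
  rcases (cell q n c).eq_empty_or_nonempty with hempty | ⟨x, hx, rfl⟩
  · rw [hempty, σ.empty]
  by_cases hgood : ∀ k, (rotOdo q π)^[k] x ∈ goodSet q n π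
  · exact hσ.2 _ ((cell_subset_periodicPts hgood).trans subset_union_right)
  · push Not at hgood
    obtain ⟨k, hk⟩ := hgood
    exact apply_cell_eq_zero_of_iterate_notMem_goodSet hσ hbad k hx hk

/-- Evaluation of a signed measure on the `q` bad cells of level `n`. -/
def badCellEval (n : ℕ) (π : Equiv.Perm (Fin q)) : SignedMeasure ℝ →ₗ[ℝ] Fin q → ℝ where
  toFun σ b := σ (badCell n π b)
  map_add' _ _ := rfl
  map_smul' _ _ := rfl

theorem rank_aperiodicSignedMeasures_le (π : Equiv.Perm (Fin q)) :
    Module.rank ℝ (aperiodicSignedMeasures q π) ≤ q := by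
  have hdisj : Disjoint (aperiodicSignedMeasures q π)
      (⨅ n, vanishingOn (range (cell q n))) := Submodule.disjoint_def.2 fun σ hσ hcell =>
    eq_zero_of_forall_mem_vanishingOn_cell
      (aperiodicSignedMeasures_le_vanishingOn_compl π hσ) ((Submodule.mem_iInf _).1 hcell)
  have hker : ∀ n, aperiodicSignedMeasures q π ⊓ LinearMap.ker (badCellEval n π) ≤
      vanishingOn (range (cell q n)) := fun n σ hσ =>
    mem_vanishingOn_cell hσ.1 (forall_mem_range.2 (congrFun hσ.2))
  simpa using
    rank_le_finrank_of_inf_ker_le_antitone (antitone_vanishingOn_cell q) hdisj _ hker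

end RotatedOdometer

section ErgodicMeasures

variable {π : Equiv.Perm (Fin q)} {μ : Measure ℝ}

lemma ergodic_of_mem_ergAperiodicMeasures [NeZero q] (hμ : μ ∈ ergAperiodicMeasures q π) :
    Ergodic (rotOdo q π) μ := by
  obtain ⟨hprob, -, hinv, herg, -⟩ := hμ
  refine ⟨⟨measurable_rotOdo π, Measure.ext fun A hA => ?_⟩, ⟨fun A hA hFA => ?_⟩⟩
  · rw [Measure.map_apply (measurable_rotOdo π) hA, hinv A hA]
  · rw [Filter.eventuallyConst_set']
    exact (herg A hA hFA).imp ae_eq_empty.2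
      fun h1 => ae_eq_univ.2 ((prob_compl_eq_zero_iff hA).2 h1)

lemma toSignedMeasure_mem_aperiodicSignedMeasures [NeZero q] [IsFiniteMeasure μ]
    (hμ : μ ∈ ergAperiodicMeasures q π) :
    μ.toSignedMeasure ∈ aperiodicSignedMeasures q π := by
  obtain ⟨-, hI, hinv, -, hper⟩ := hμ
  refine ⟨fun A hA => ?_, fun A hA => ?_⟩
  · rw [Measure.toSignedMeasure_apply_measurable hA,
      Measure.toSignedMeasure_apply_measurable (measurable_rotOdo π hA), measureReal_def,
      hinv A hA, measureReal_def]
  · by_cases hAm : MeasurableSet A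
    · have hnull : μ A = 0 := by
        refine measure_mono_null (fun x hx => ?_) (measure_union_null hI hper)
        by_cases hxI : x ∈ Ico (0 : ℝ) 1
        · exact .inr ⟨hxI, (hA hx).resolve_left (not_not.2 hxI)⟩
        · exact .inl hxI
      rw [Measure.toSignedMeasure_apply_measurable hAm, measureReal_def, hnull,
        ENNReal.toReal_zero]
    · exact VectorMeasure.not_measurable _ hAm

lemma linearIndependent_ergAperiodicMeasures [NeZero q] (π : Equiv.Perm (Fin q))
    [∀ μ : ergAperiodicMeasures q π, IsProbabilityMeasure (μ : Measure ℝ)] :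
    LinearIndependent ℝ fun μ : ergAperiodicMeasures q π => (μ : Measure ℝ).toSignedMeasure :=
  linearIndependent_toSignedMeasure (fun μ => IsProbabilityMeasure.ne_zero (μ : Measure ℝ))
    fun μ ν hμν => mutuallySingular_of_ergodic_of_ne (ergodic_of_mem_ergAperiodicMeasures μ.2)
      (ergodic_of_mem_ergAperiodicMeasures ν.2) (Subtype.coe_ne_coe.2 hμν)

end ErgodicMeasures

end RotOdo

/-- the aperiodic part of the rotated odometer admits at most `q` ergodic
invariant Borel probability measures. -/
theorem rotOdo_at_most_q_ergodic_measures (q : ℕ) (hq : 2 ≤ q) (π : Equiv.Perm (Fin q)) :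
    (ergAperiodicMeasures q π).Finite ∧ (ergAperiodicMeasures q π).ncard ≤ q := by
  have : NeZero q := ⟨by omega⟩
  have : ∀ μ : ergAperiodicMeasures q π, IsProbabilityMeasure (μ : Measure ℝ) := fun μ => μ.2.1
  let toSigned (μ : ergAperiodicMeasures q π) : RotOdo.aperiodicSignedMeasures q π :=
    ⟨(μ : Measure ℝ).toSignedMeasure, RotOdo.toSignedMeasure_mem_aperiodicSignedMeasures μ.2⟩
  have hindep : LinearIndependent ℝ toSigned :=
    .of_comp (Submodule.subtype _) (RotOdo.linearIndependent_ergAperiodicMeasures π)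
  have hcard : Cardinal.mk (ergAperiodicMeasures q π) ≤ q := by
    simpa using hindep.cardinal_lift_le_rank.trans
      (Cardinal.lift_le.2 (RotOdo.rank_aperiodicSignedMeasures_le π))
  have hfin : (ergAperiodicMeasures q π).Finite :=
    Cardinal.lt_aleph0_iff_set_finite.1 (hcard.trans_lt Cardinal.natCast_lt_aleph0)
  exact ⟨hfin, by exact_mod_cast (Set.cast_ncard hfin).trans_le hcard⟩
end

section
/- Let (a_n)_{n≥1} and (b_n)_{n≥1} be the integer sequences defined by a_1 = b_1 = 1, a_{n+1} = 2(a_n + b_n) and b_{n+1} = 3·a_n. Then for every m ≥ 1 there exists N ∈ ℕ such that for all n ≥ N, 2^m divides a_n and 2^m divides b_n. -/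
/-!
The vector of heights evolves by `A = !![2, 2; 3, 0]`. This matrix is nilpotent modulo `2`: all
entries of `A ^ 2` are even, so every two steps of the recursion contribute a factor `2`.
-/

open Matrix

section MatrixRecurrence

variable {R ι : Type*} [Fintype ι] [DecidableEq ι]

theorem eq_matrix_pow_mulVec_of_succ [Semiring R] {A : Matrix ι ι R} {v : ℕ → ι → R} {k : ℕ}
    (hv : ∀ n, k ≤ n → v (n + 1) = A *ᵥ v n) (n : ℕ) : v (k + n) = A ^ n *ᵥ v k := by
  induction n with
  | zero => simp
  | succ n ih => rw [← add_assoc, hv (k + n) (k.le_add_right n), ih, mulVec_mulVec, pow_succ']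

variable [CommSemiring R] {A : Matrix ι ι R} {p : R}

theorem pow_dvd_matrix_pow_apply (hA : ∀ i j, p ∣ A i j) (m : ℕ) (i j : ι) :
    p ^ m ∣ (A ^ m) i j := by
  induction m generalizing i j with
  | zero => simp
  | succ m ih =>
    rw [pow_succ, pow_succ, mul_apply]
    exact Finset.dvd_sum fun k _ => mul_dvd_mul (ih i k) (hA k j)

theorem pow_dvd_apply_of_mulVec_recurrence {d n₀ : ℕ} {v : ℕ → ι → R}
    (hA : ∀ i j, p ∣ (A ^ d) i j) (hv : ∀ n, n₀ ≤ n → v (n + 1) = A *ᵥ v n)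
    {m n : ℕ} (hn : n₀ + d * m ≤ n) (i : ι) : p ^ m ∣ v n i := by
  obtain ⟨k, hk, rfl⟩ : ∃ k, n₀ ≤ k ∧ n = k + d * m := ⟨n - d * m, by omega, by omega⟩
  rw [eq_matrix_pow_mulVec_of_succ fun l hl => hv l (hk.trans hl), pow_mul]
  exact Finset.dvd_sum fun j _ => (pow_dvd_matrix_pow_apply hA m i j).mul_right (v k j)

end MatrixRecurrence

section HeightMatrix

variable {R : Type*} [CommSemiring R]

/-- The matrix of the recursion `a (n + 1) = p * (a n + b n)`, `b (n + 1) = c * a n`,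
acting on column vectors `![a n, b n]`. The rotated odometer has `p = 2` and `c = 3`. -/
def heightMatrix (p c : R) : Matrix (Fin 2) (Fin 2) R :=
  !![p, p; c, 0]

theorem heightMatrix_mulVec (p c x y : R) :
    heightMatrix p c *ᵥ ![x, y] = ![p * (x + y), c * x] := by
  ext i
  fin_cases i <;> simp [heightMatrix, mul_add, mul_comm]

theorem heightMatrix_sq (p c : R) : heightMatrix p c ^ 2 = p • !![p + c, p; c, c] := by
  ext i j
  fin_cases i <;> fin_cases j <;> simp [heightMatrix, sq, mul_add, mul_comm]

theorem dvd_heightMatrix_sq_apply (p c : R) (i j : Fin 2) : p ∣ (heightMatrix p c ^ 2) i j := by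
  rw [heightMatrix_sq, Matrix.smul_apply, smul_eq_mul]
  exact dvd_mul_right p _

theorem heights_eventually_divisible_by_two_pow_general {p c : R} {a b : ℕ → R}
    (ha : ∀ n, 1 ≤ n → a (n + 1) = p * (a n + b n)) (hb : ∀ n, 1 ≤ n → b (n + 1) = c * a n)
    {m n : ℕ} (hn : 1 + 2 * m ≤ n) : p ^ m ∣ a n ∧ p ^ m ∣ b n := by
  have heights_succ (k : ℕ) (hk : 1 ≤ k) :
      ![a (k + 1), b (k + 1)] = heightMatrix p c *ᵥ ![a k, b k] := by
    rw [heightMatrix_mulVec, ha k hk, hb k hk]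
  have heights_dvd := pow_dvd_apply_of_mulVec_recurrence (v := fun k => ![a k, b k])
    (dvd_heightMatrix_sq_apply p c) heights_succ hn
  exact ⟨heights_dvd 0, heights_dvd 1⟩

end HeightMatrix

/-- for the integer sequences with `a 1 = b 1 = 1`,
`a (n+1) = 2(a n + b n)`, `b (n+1) = 3 a n` (for `n ≥ 1`), every power `2^m` eventually
divides all `a n` and `b n`. -/
theorem heights_eventually_divisible_by_two_pow (a b : ℕ → ℤ)
    (ha1 : a 1 = 1) (hb1 : b 1 = 1)
    (ha : ∀ n : ℕ, 1 ≤ n → a (n + 1) = 2 * (a n + b n))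
    (hb : ∀ n : ℕ, 1 ≤ n → b (n + 1) = 3 * a n) :
    ∀ m : ℕ, 1 ≤ m → ∃ N : ℕ, ∀ n : ℕ, N ≤ n →
      (2 ^ m : ℤ) ∣ a n ∧ (2 ^ m : ℤ) ∣ b n :=
  fun m _ => ⟨1 + 2 * m, fun _ => heights_eventually_divisible_by_two_pow_general ha hb⟩
end

section
/- Let (a_n)_{n≥1} and (b_n)_{n≥1} be the integer sequences defined by a_1 = b_1 = 1, a_{n+1} = 3a_n + 2b_n and b_{n+1} = 2a_n + b_n. Then for every n ≥ 1: a_n = F(3n−1) and b_n = F(3n−2), where F denotes the Fibonacci sequence (F(1) = F(2) = 1, F(k+2) = F(k+1) + F(k)), and gcd(a_n, b_n) = 1. -/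
/-!
The matrix `!![3, 2; 2, 1]` of the recursion is the cube of the Fibonacci matrix `!![1, 1; 1, 0]`,
so one step of the recursion moves a pair of consecutive Fibonacci numbers three places along the
sequence. The initial pair `(1, 1)` is `(F 2, F 1)`, and consecutive Fibonacci numbers are coprime.
-/

section FibRecurrence

variable {R : Type*} [NonAssocSemiring R] {u v : ℕ → R} {j m : ℕ}

-- The coefficients are the entries of `!![1, 1; 1, 0] ^ (j + 1)`.
theorem eq_fib_mul_add_of_fib_recurrence
    (hu₀ : u 0 = Nat.fib (m + 1)) (hv₀ : v 0 = Nat.fib m)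
    (hu : ∀ n, u (n + 1) = Nat.fib (j + 2) * u n + Nat.fib (j + 1) * v n)
    (hv : ∀ n, v (n + 1) = Nat.fib (j + 1) * u n + Nat.fib j * v n) (n : ℕ) :
    u n = Nat.fib ((j + 1) * n + m + 1) ∧ v n = Nat.fib ((j + 1) * n + m) := by
  induction n with
  | zero => simpa using And.intro hu₀ hv₀
  | succ n ih =>
    obtain ⟨ihu, ihv⟩ := ih
    set N := (j + 1) * n + m with hN
    have index_succ : (j + 1) * (n + 1) + m = j + N + 1 := by rw [hN]; ring
    have fib_fst : Nat.fib (j + N + 1 + 1) =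
        Nat.fib (j + 2) * Nat.fib (N + 1) + Nat.fib (j + 1) * Nat.fib N := by
      rw [add_right_comm j N 1, Nat.fib_add (j + 1) N, add_comm]
    have fib_snd : Nat.fib (j + N + 1) =
        Nat.fib (j + 1) * Nat.fib (N + 1) + Nat.fib j * Nat.fib N := by
      rw [Nat.fib_add j N, add_comm]
    simp only [hu, hv, ihu, ihv, index_succ, fib_fst, fib_snd, Nat.cast_add, Nat.cast_mul, and_self]

end FibRecurrence

/-- for the integer sequences with `a 1 = b 1 = 1`,
`a (n+1) = 3 a n + 2 b n`, `b (n+1) = 2 a n + b n` (for `n ≥ 1`), one has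
`a n = F (3n - 1)`, `b n = F (3n - 2)` (Fibonacci numbers) and `gcd (a n) (b n) = 1`. -/
theorem heights_fibonacci_and_coprime (a b : ℕ → ℤ)
    (ha1 : a 1 = 1) (hb1 : b 1 = 1)
    (ha : ∀ n : ℕ, 1 ≤ n → a (n + 1) = 3 * a n + 2 * b n)
    (hb : ∀ n : ℕ, 1 ≤ n → b (n + 1) = 2 * a n + b n) :
    ∀ n : ℕ, 1 ≤ n →
      a n = (Nat.fib (3 * n - 1) : ℤ) ∧ b n = (Nat.fib (3 * n - 2) : ℤ) ∧
      Int.gcd (a n) (b n) = 1 := by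
  intro n hn
  obtain ⟨k, rfl⟩ := Nat.exists_eq_add_of_le' hn
  obtain ⟨ha_fib, hb_fib⟩ : a (k + 1) = Nat.fib (3 * k + 2) ∧ b (k + 1) = Nat.fib (3 * k + 1) :=
    eq_fib_mul_add_of_fib_recurrence (u := fun i ↦ a (i + 1)) (v := fun i ↦ b (i + 1))
      (j := 2) (m := 1) (by simpa using ha1) (by simpa using hb1)
      (fun i ↦ by simpa [Nat.fib_add_two] using ha (i + 1) i.succ_pos)
      (fun i ↦ by simpa [Nat.fib_add_two] using hb (i + 1) i.succ_pos) k
  have hcoprime : Int.gcd (a (k + 1)) (b (k + 1)) = 1 := by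
    rw [ha_fib, hb_fib, Int.gcd_natCast_natCast]
    exact (Nat.fib_coprime_fib_succ (3 * k + 1)).symm
  exact ⟨ha_fib, hb_fib, hcoprime⟩
end

section
/- Let (a_n), (b_n), (c_n) for n ≥ 1 be the integer sequences defined by a_1 = b_1 = c_1 = 1, a_{n+1} = 3a_n + 2b_n, b_{n+1} = 2a_n + b_n, and c_{n+1} = 6a_n + 10b_n + 8c_n. Then for every n ≥ 2: 4 divides c_n, and 8 divides c_n if and only if n is even. -/
/-!
Modulo `8` the recurrence for `c` reads `c (n + 1) ≡ 2 (b n - a n)`, so only the residue of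
`b n - a n` modulo `4` matters. Since `b (n + 1) - a (n + 1) = -2 a n - (b n - a n)` and `a n` stays
odd, this residue moves by `2` at every step, starting from `0`. Hence `c n ≡ 4 n` modulo `8`.
-/

section Recurrence

variable {a b c : ℕ → ℤ}

theorem odd_a (ha1 : Odd (a 1)) (ha : ∀ n : ℕ, 1 ≤ n → a (n + 1) = 3 * a n + 2 * b n)
    {n : ℕ} (hn : 1 ≤ n) : Odd (a n) := by
  induction n, hn using Nat.le_induction with
  | base => exact ha1
  | succ n hn ih =>
    rw [ha n hn]
    exact (Odd.mul (by decide) ih).add_even (even_two_mul _)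

theorem b_sub_a_modEq (ha1 : Odd (a 1)) (hab1 : a 1 ≡ b 1 [ZMOD 4])
    (ha : ∀ n : ℕ, 1 ≤ n → a (n + 1) = 3 * a n + 2 * b n)
    (hb : ∀ n : ℕ, 1 ≤ n → b (n + 1) = 2 * a n + b n)
    {n : ℕ} (hn : 1 ≤ n) : b n - a n ≡ 2 * (n + 1) [ZMOD 4] := by
  induction n, hn using Nat.le_induction with
  | base => exact (Int.modEq_zero_iff_dvd.mpr hab1.dvd).trans (by decide)
  | succ n hn ih =>
    obtain ⟨k, hk⟩ := odd_a ha1 ha hn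
    calc b (n + 1) - a (n + 1) = -2 * a n - (b n - a n) := by rw [ha n hn, hb n hn]; ring
      _ ≡ -2 * a n - 2 * (n + 1) [ZMOD 4] := ih.sub_left _
      _ ≡ 2 * ((n + 1 : ℕ) + 1) [ZMOD 4] :=
        Int.modEq_iff_dvd.mpr ⟨n + k + 2, by rw [hk]; push_cast; ring⟩

theorem c_modEq_four_mul (ha1 : Odd (a 1)) (hab1 : a 1 ≡ b 1 [ZMOD 4])
    (ha : ∀ n : ℕ, 1 ≤ n → a (n + 1) = 3 * a n + 2 * b n)
    (hb : ∀ n : ℕ, 1 ≤ n → b (n + 1) = 2 * a n + b n)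
    (hc : ∀ n : ℕ, 1 ≤ n → c (n + 1) = 6 * a n + 10 * b n + 8 * c n)
    {n : ℕ} (hn : 2 ≤ n) : c n ≡ 4 * n [ZMOD 8] := by
  obtain ⟨m, rfl⟩ := Nat.exists_eq_add_of_le' (one_le_two.trans hn)
  have hm : 1 ≤ m := Nat.le_of_succ_le_succ hn
  calc c (m + 1) = 2 * (b m - a m) + 8 * (a m + b m + c m) := by rw [hc m hm]; ring
    _ ≡ 2 * (b m - a m) [ZMOD 8] := Int.add_modulus_mul_modEq_iff.mpr rfl
    _ ≡ 2 * (2 * (m + 1)) [ZMOD 8] := (b_sub_a_modEq ha1 hab1 ha hb hm).mul_left'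
    _ = 4 * (m + 1 : ℕ) := by push_cast; ring

theorem c_divisibility_pattern_general (ha1 : Odd (a 1)) (hab1 : a 1 ≡ b 1 [ZMOD 4])
    (ha : ∀ n : ℕ, 1 ≤ n → a (n + 1) = 3 * a n + 2 * b n)
    (hb : ∀ n : ℕ, 1 ≤ n → b (n + 1) = 2 * a n + b n)
    (hc : ∀ n : ℕ, 1 ≤ n → c (n + 1) = 6 * a n + 10 * b n + 8 * c n)
    {n : ℕ} (hn : 2 ≤ n) : 4 ∣ c n ∧ (8 ∣ c n ↔ Even n) := by
  have hmod : c n ≡ 4 * n [ZMOD 8] := c_modEq_four_mul ha1 hab1 ha hb hc hn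
  refine ⟨(hmod.of_dvd (by decide)).dvd_iff.mpr (dvd_mul_right 4 _), ?_⟩
  calc 8 ∣ c n ↔ (4 * 2 : ℤ) ∣ 4 * n := hmod.dvd_iff
    _ ↔ (2 : ℤ) ∣ n := mul_dvd_mul_iff_left four_ne_zero
    _ ↔ Even n := by rw [← even_iff_two_dvd, Int.even_coe_nat]

end Recurrence

/-- for the integer sequences with `a 1 = b 1 = c 1 = 1`,
`a (n+1) = 3 a n + 2 b n`, `b (n+1) = 2 a n + b n`, `c (n+1) = 6 a n + 10 b n + 8 c n`
(for `n ≥ 1`), for every `n ≥ 2` one has `4 ∣ c n`, and `8 ∣ c n` iff `n` is even. -/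
theorem c_divisibility_pattern (a b c : ℕ → ℤ)
    (ha1 : a 1 = 1) (hb1 : b 1 = 1) (hc1 : c 1 = 1)
    (ha : ∀ n : ℕ, 1 ≤ n → a (n + 1) = 3 * a n + 2 * b n)
    (hb : ∀ n : ℕ, 1 ≤ n → b (n + 1) = 2 * a n + b n)
    (hc : ∀ n : ℕ, 1 ≤ n → c (n + 1) = 6 * a n + 10 * b n + 8 * c n) :
    ∀ n : ℕ, 2 ≤ n → (4 ∣ c n) ∧ ((8 ∣ c n) ↔ Even n) := by
  intro n hn
  exact c_divisibility_pattern_general (ha1 ▸ odd_one) (by rw [ha1, hb1]) ha hb hc hn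
end

section
/- For every nonzero integer v there exist infinitely many n ∈ ℕ such that the distance from 5·v·8^n·√5 to the nearest integer is greater than 1/16; that is, for infinitely many n, |5·v·8^n·√5 − m| > 1/16 for every integer m. In particular, the distance from 5·v·8^n·√5 to ℤ does not tend to 0 as n → ∞. -/
/-!
Write `ε n = b ^ n * x - round (b ^ n * x)`. As `ε (n + 1) - b * ε n` is an integer, two consecutive
deviations of absolute value at most `δ < 1 / (|b| + 1)` satisfy `ε (n + 1) = b * ε n`. Deviations
that stay this small therefore grow geometrically, so they all vanish.
-/

open Filter

theorem eq_mul_of_abs_sub_add_abs_mul_abs_sub_lt_one {R : Type*} [CommRing R] [LinearOrder R]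
    [IsStrictOrderedRing R] {b m m' : ℤ} {x : R}
    (h : |b * x - m'| + |(b : R)| * |x - m| < 1) : m' = b * m := by
  have hlt : |((b * m - m' : ℤ) : R)| < 1 :=
    calc |((b * m - m' : ℤ) : R)| = |(b * x - m') - b * (x - m)| := by
          push_cast
          ring_nf
      _ ≤ |b * x - m'| + |b * (x - m)| := abs_sub _ _
      _ = |b * x - m'| + |(b : R)| * |x - m| := by rw [abs_mul]
      _ < 1 := h
  have hzero : b * m - m' = 0 := Int.abs_lt_one_iff.mp (mod_cast hlt)
  exact (sub_eq_zero.mp hzero).symm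

section FloorField

variable {K : Type*} [Field K] [LinearOrder K] [IsStrictOrderedRing K] [FloorRing K]
  {b : ℤ} {x δ : K}

theorem round_intCast_mul_of_abs_sub_round_le (hδ : δ < 1 / (|(b : K)| + 1))
    (hx : |x - round x| ≤ δ) (hbx : |b * x - round (b * x)| ≤ δ) :
    round (b * x) = b * round x := by
  apply eq_mul_of_abs_sub_add_abs_mul_abs_sub_lt_one (x := x)
  calc |b * x - round (b * x)| + |(b : K)| * |x - round x| ≤ δ + |(b : K)| * δ := by gcongr
    _ = δ * (|(b : K)| + 1) := by ring
    _ < 1 := (lt_div_iff₀ (by positivity)).mp hδ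

theorem round_pow_mul_of_forall_abs_sub_round_le (hδ : δ < 1 / (|(b : K)| + 1))
    (h : ∀ n : ℕ, |b ^ n * x - round (b ^ n * x)| ≤ δ) (n : ℕ) :
    round (b ^ n * x) = b ^ n * round x := by
  induction n with
  | zero => simp
  | succ n ih =>
    have hsucc := h (n + 1)
    rw [pow_succ', mul_assoc] at hsucc
    rw [pow_succ', mul_assoc, round_intCast_mul_of_abs_sub_round_le hδ (h n) hsucc, ih,
      pow_succ', mul_assoc]

theorem eq_round_of_forall_abs_pow_mul_sub_round_le (hb : 1 < |b|)
    (hδ : δ < 1 / (|(b : K)| + 1)) (h : ∀ n : ℕ, |b ^ n * x - round (b ^ n * x)| ≤ δ) :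
    x = round x := by
  by_contra hne
  have hpos : 0 < |x - round x| := abs_pos.mpr (sub_ne_zero.mpr hne)
  have hbK : 1 < |(b : K)| := mod_cast hb
  have hbound (n : ℕ) : |(b : K)| ^ n * |x - round x| ≤ δ := by
    simpa only [round_pow_mul_of_forall_abs_sub_round_le hδ h n, Int.cast_mul, Int.cast_pow,
      ← mul_sub, abs_mul, abs_pow] using h n
  obtain ⟨n, hn⟩ := pow_unbounded_of_one_lt (δ / |x - round x|) hbK
  exact (hbound n).not_gt ((div_lt_iff₀ hpos).mp hn)

theorem frequently_lt_abs_pow_mul_sub_round (hb : 1 < |b|) (hδ : δ < 1 / (|(b : K)| + 1))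
    (hx : ∀ (n : ℕ) (m : ℤ), b ^ n * x ≠ m) :
    ∃ᶠ n : ℕ in atTop, δ < |b ^ n * x - round (b ^ n * x)| := by
  refine frequently_atTop.mpr fun N => ?_
  by_contra! hsmall
  refine hx N _ (eq_round_of_forall_abs_pow_mul_sub_round_le hb hδ fun n => ?_)
  rw [← mul_assoc, ← pow_add]
  exact hsmall (n + N) (Nat.le_add_left N n)

end FloorField

theorem iInf_abs_sub_intCast (x : ℝ) : ⨅ m : ℤ, |x - m| = |x - round x| :=
  le_antisymm (ciInf_le ⟨0, Set.forall_mem_range.mpr fun _ => abs_nonneg _⟩ (round x))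
    (le_ciInf (round_le x))

theorem dist_to_int_not_tendsto_zero_general {b : ℤ} (hb : 1 < |b|) {x : ℝ}
    (hx : ∀ (n : ℕ) (m : ℤ), b ^ n * x ≠ m) :
    (∀ δ < 1 / (|(b : ℝ)| + 1), {n : ℕ | ∀ m : ℤ, δ < |b ^ n * x - m|}.Infinite) ∧
    ¬ Tendsto (fun n : ℕ => ⨅ m : ℤ, |b ^ n * x - m|) atTop (nhds 0) := by
  constructor
  · intro δ hδ
    refine Nat.frequently_atTop_iff_infinite.mp ?_
    exact (frequently_lt_abs_pow_mul_sub_round hb hδ hx).mono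
      fun n hn m => hn.trans_le (round_le _ m)
  · intro hlim
    obtain ⟨δ, hδ₀, hδ⟩ := exists_between (show 0 < 1 / (|(b : ℝ)| + 1) by positivity)
    simp only [iInf_abs_sub_intCast] at hlim
    obtain ⟨n, hgt, hlt⟩ := ((frequently_lt_abs_pow_mul_sub_round hb hδ hx).and_eventually
      (hlim.eventually_lt_const hδ₀)).exists
    exact hgt.not_gt hlt

theorem irrational_pow_mul_ne_intCast {b : ℤ} (hb : b ≠ 0) {x : ℝ} (hx : Irrational x) (n : ℕ)
    (m : ℤ) : b ^ n * x ≠ m := by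
  exact_mod_cast (hx.intCast_mul (pow_ne_zero n hb)).ne_int m

theorem irrational_five_mul_intCast_mul_sqrt_five {v : ℤ} (hv : v ≠ 0) :
    Irrational (5 * v * √5) := by
  have hsqrt : Irrational √5 := by exact_mod_cast Nat.prime_five.irrational_sqrt
  exact_mod_cast hsqrt.intCast_mul (mul_ne_zero (by norm_num : (5 : ℤ) ≠ 0) hv)

/-- for every nonzero integer `v` there are infinitely many `n` such that the
distance from `5·v·8^n·√5` to the nearest integer exceeds `1/16`; in particular this distance
does not tend to `0`. -/
theorem dist_to_int_not_tendsto_zero (v : ℤ) (hv : v ≠ 0) :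
    {n : ℕ | ∀ m : ℤ, (1 : ℝ) / 16 < |5 * (v : ℝ) * 8 ^ n * Real.sqrt 5 - (m : ℝ)|}.Infinite ∧
    ¬ Filter.Tendsto
        (fun n : ℕ => ⨅ m : ℤ, |5 * (v : ℝ) * 8 ^ n * Real.sqrt 5 - (m : ℝ)|)
        Filter.atTop (nhds 0) := by
  have hterm (n : ℕ) : 5 * (v : ℝ) * 8 ^ n * √5 = ((8 : ℤ) : ℝ) ^ n * (5 * v * √5) := by
    push_cast
    ring
  obtain ⟨hinf, hlim⟩ := dist_to_int_not_tendsto_zero_general (by norm_num : 1 < |(8 : ℤ)|)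
    (irrational_pow_mul_ne_intCast (by norm_num)
      (irrational_five_mul_intCast_mul_sqrt_five hv))
  simp only [hterm]
  exact ⟨hinf _ (by norm_num), hlim⟩
end

section
/- Let q ≥ 2 and let π be a permutation of {0,…,q−1}. Define the permutation π' of {0,…,2q−1} by π'(i) = π(i) + q for 0 ≤ i < q and π'(i) = i − q for q ≤ i < 2q, and consider the rotated odometer F_{π'} on [0,1) built from 2q intervals. Then for every x ∈ [0,1/2) one has F_{π'}(x) = (1/2)·F_π(2x). In particular, the half-interval [0,1/2) is F_{π'}-invariant, the first return map of F_{π'} to [0,1/2) has return time 1 at every point, and this return map is topologically conjugate to F_π on [0,1) via the scaling h(x) = 2x, i.e. h(F_{π'}(x)) = F_π(h(x)) for all x ∈ [0,1/2). -/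
/-!
On `[0, 1/2)` the exchange `R_{π'}` is the copy of `R_π` scaled by `1/2`, followed by the shift
by `1/2`: `R_{π'} x = 1/2 + R_π (2x) / 2`. The self-similarity `a (1/2 + t/2) = a t / 2` carries
this copy back to `[0, 1/2)`.
-/

section VonNeumannKakutani

/-- The `n`-th interval of continuity of `vnk`, counted from `n = 0`; it corresponds to the
exponent `n + 1` in the definition of `vnk`. -/
def vnkInterval (n : ℕ) : Set ℝ :=
  Set.Ico (1 - (2 : ℝ)⁻¹ ^ n) (1 - (2 : ℝ)⁻¹ ^ (n + 1))

theorem exists_mem_vnkInterval {x : ℝ} (hx : x ∈ Set.Ico (0 : ℝ) 1) :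
    ∃ n, x ∈ vnkInterval n := by
  obtain ⟨n, hlt, hle⟩ := exists_nat_pow_near_of_lt_one (sub_pos.2 hx.2)
    (sub_le_self 1 hx.1) (by norm_num : (0 : ℝ) < 2⁻¹) (by norm_num)
  exact ⟨n, sub_le_comm.1 hle, lt_sub_comm.1 hlt⟩

theorem vnk_of_mem_vnkInterval {n : ℕ} {x : ℝ} (hx : x ∈ vnkInterval n) :
    vnk x = x - 1 + 3 * (2 : ℝ)⁻¹ ^ (n + 1) := by
  classical
  have hex : ∃ m : ℕ, x < 1 - (2 : ℝ)⁻¹ ^ m := ⟨n + 1, hx.2⟩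
  have hfind : Nat.find hex = n + 1 := by
    refine (Nat.find_eq_iff hex).2 ⟨hx.2, fun m hm => not_lt.2 (le_trans ?_ hx.1)⟩
    have hpow : (2 : ℝ)⁻¹ ^ n ≤ 2⁻¹ ^ m :=
      pow_le_pow_of_le_one (by norm_num) (by norm_num) (Nat.lt_succ_iff.1 hm)
    exact sub_le_sub_left hpow 1
  rw [← hfind]
  exact dif_pos hex

theorem mapsTo_vnk_s19 : Set.MapsTo vnk (Set.Ico 0 1) (Set.Ico 0 1) := by
  intro x hx
  obtain ⟨n, hn⟩ := exists_mem_vnkInterval hx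
  have hpow_pos : 0 < (2 : ℝ)⁻¹ ^ n := by positivity
  have hpow_le : (2 : ℝ)⁻¹ ^ n ≤ 1 := pow_le_one₀ (by norm_num) (by norm_num)
  rw [vnk_of_mem_vnkInterval hn]
  simp only [vnkInterval, Set.mem_Ico, pow_succ] at hn ⊢
  constructor <;> linarith

theorem half_add_div_two_mem_vnkInterval_succ {n : ℕ} {t : ℝ} (ht : t ∈ vnkInterval n) :
    1 / 2 + t / 2 ∈ vnkInterval (n + 1) := by
  simp only [vnkInterval, Set.mem_Ico, pow_succ] at ht ⊢
  constructor <;> linarith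

theorem vnk_half_add_div_two {t : ℝ} (ht : t ∈ Set.Ico (0 : ℝ) 1) :
    vnk (1 / 2 + t / 2) = vnk t / 2 := by
  obtain ⟨n, hn⟩ := exists_mem_vnkInterval ht
  rw [vnk_of_mem_vnkInterval hn,
    vnk_of_mem_vnkInterval (half_add_div_two_mem_vnkInterval_succ hn)]
  ring

end VonNeumannKakutani

section IntervalExchange

/-- The `k`-th of the intervals of length `1 / q` exchanged by `rotPerm q π`. The index is a
natural number so that intervals for different `q` can be compared. -/
def rotInterval (q k : ℕ) : Set ℝ :=
  Set.Ico ((k : ℝ) / q) (((k : ℝ) + 1) / q)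

variable {q : ℕ}

theorem mem_rotInterval_iff (hq : 0 < q) {k : ℕ} {x : ℝ} :
    x ∈ rotInterval q k ↔ (k : ℝ) ≤ x * q ∧ x * q < k + 1 := by
  have hq' : (0 : ℝ) < q := Nat.cast_pos.2 hq
  rw [rotInterval, Set.mem_Ico, div_le_iff₀ hq', lt_div_iff₀ hq']

theorem two_mul_mem_rotInterval_iff {k : ℕ} {x : ℝ} :
    2 * x ∈ rotInterval q k ↔ x ∈ rotInterval (2 * q) k := by
  simp only [rotInterval, Set.mem_Ico, Nat.cast_mul, Nat.cast_ofNat, div_mul_eq_div_div_swap,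
    div_le_iff₀' (zero_lt_two' ℝ), lt_div_iff₀' (zero_lt_two' ℝ)]

theorem rotInterval_subset_Ico (i : Fin q) : rotInterval q i ⊆ Set.Ico 0 1 := by
  have hq : (0 : ℝ) < q := Nat.cast_pos.2 i.pos
  have hi : ((i : ℕ) : ℝ) + 1 ≤ q := by exact_mod_cast i.isLt
  exact Set.Ico_subset_Ico (by positivity) ((div_le_one hq).2 hi)

theorem exists_mem_rotInterval (hq : 0 < q) {x : ℝ} (hx : x ∈ Set.Ico (0 : ℝ) 1) :
    ∃ i : Fin q, x ∈ rotInterval q i := by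
  have hxq : 0 ≤ x * q := mul_nonneg hx.1 q.cast_nonneg
  have hfloor : ⌊x * q⌋₊ < q :=
    (Nat.floor_lt hxq).2 (mul_lt_of_lt_one_left (Nat.cast_pos.2 hq) hx.2)
  exact ⟨⟨_, hfloor⟩,
    (mem_rotInterval_iff hq).2 ⟨Nat.floor_le hxq, Nat.lt_floor_add_one _⟩⟩

theorem eq_of_mem_rotInterval {i j : Fin q} {x : ℝ} (hi : x ∈ rotInterval q i)
    (hj : x ∈ rotInterval q j) : i = j := by
  have hxq : 0 ≤ x * q := mul_nonneg (rotInterval_subset_Ico i hi).1 q.cast_nonneg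
  rw [mem_rotInterval_iff i.pos, ← Nat.floor_eq_iff hxq] at hi hj
  exact Fin.ext (hi.symm.trans hj)

variable {π : Equiv.Perm (Fin q)}

theorem rotPerm_of_mem_rotInterval {i : Fin q} {x : ℝ} (hx : x ∈ rotInterval q i) :
    rotPerm q π x = x + (((π i : ℕ) : ℝ) - (i : ℕ)) / q := by
  have hex : ∃ j : Fin q, x ∈ rotInterval q j := ⟨i, hx⟩
  have hchoose : hex.choose = i := eq_of_mem_rotInterval hex.choose_spec hx
  conv_rhs => rw [← hchoose]
  exact dif_pos hex

theorem rotPerm_mem_rotInterval {i : Fin q} {x : ℝ} (hx : x ∈ rotInterval q i) :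
    rotPerm q π x ∈ rotInterval q (π i) := by
  have hq : (q : ℝ) ≠ 0 := Nat.cast_ne_zero.2 i.pos.ne'
  rw [rotPerm_of_mem_rotInterval hx, mem_rotInterval_iff i.pos, add_mul, div_mul_cancel₀ _ hq]
  rw [mem_rotInterval_iff i.pos] at hx
  constructor <;> linarith

theorem mapsTo_rotPerm_s19 (hq : 0 < q) :
    Set.MapsTo (rotPerm q π) (Set.Ico 0 1) (Set.Ico 0 1) := by
  intro x hx
  obtain ⟨i, hi⟩ := exists_mem_rotInterval hq hx
  exact rotInterval_subset_Ico (π i) (rotPerm_mem_rotInterval hi)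

end IntervalExchange

section Doubling

variable {q : ℕ} {π : Equiv.Perm (Fin q)} {π' : Equiv.Perm (Fin (2 * q))}

theorem mapsTo_rotOdo_s19 (hq : 0 < q) : Set.MapsTo (rotOdo q π) (Set.Ico 0 1) (Set.Ico 0 1) :=
  mapsTo_vnk_s19.comp (mapsTo_rotPerm_s19 hq)

theorem two_mul_mem_Ico_zero_one {x : ℝ} (hx : x ∈ Set.Ico (0 : ℝ) (1 / 2)) :
    2 * x ∈ Set.Ico (0 : ℝ) 1 :=
  ⟨by linarith [hx.1], by linarith [hx.2]⟩

theorem rotPerm_doubling (hq : 0 < q)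
    (hπ' : ∀ i : Fin q, (π' (i.castLE (Nat.le_mul_of_pos_left q two_pos)) : ℕ) = π i + q)
    {x : ℝ} (hx : x ∈ Set.Ico (0 : ℝ) (1 / 2)) :
    rotPerm (2 * q) π' x = 1 / 2 + rotPerm q π (2 * x) / 2 := by
  obtain ⟨i, hi⟩ := exists_mem_rotInterval hq (two_mul_mem_Ico_zero_one hx)
  have hi' : x ∈ rotInterval (2 * q) (i.castLE (Nat.le_mul_of_pos_left q two_pos)) :=
    two_mul_mem_rotInterval_iff.1 hi
  have hq' : (q : ℝ) ≠ 0 := Nat.cast_ne_zero.2 hq.ne'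
  rw [rotPerm_of_mem_rotInterval hi, rotPerm_of_mem_rotInterval hi', hπ', Fin.val_castLE]
  push_cast
  field_simp
  ring

theorem rotOdo_doubling_general (hq : 0 < q)
    (hπ' : ∀ i : Fin q, (π' (i.castLE (Nat.le_mul_of_pos_left q two_pos)) : ℕ) = π i + q) :
    (∀ x ∈ Set.Ico (0 : ℝ) (1 / 2),
        rotOdo (2 * q) π' x = (1 / 2) * rotOdo q π (2 * x)) ∧
    Set.MapsTo (rotOdo (2 * q) π') (Set.Ico (0 : ℝ) (1 / 2)) (Set.Ico (0 : ℝ) (1 / 2)) ∧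
    (∀ x ∈ Set.Ico (0 : ℝ) (1 / 2),
        2 * rotOdo (2 * q) π' x = rotOdo q π (2 * x)) := by
  have hhalf : ∀ x ∈ Set.Ico (0 : ℝ) (1 / 2),
      rotOdo (2 * q) π' x = (1 / 2) * rotOdo q π (2 * x) := by
    intro x hx
    calc rotOdo (2 * q) π' x
        = vnk (1 / 2 + rotPerm q π (2 * x) / 2) := congrArg vnk (rotPerm_doubling hq hπ' hx)
      _ = rotOdo q π (2 * x) / 2 :=
        vnk_half_add_div_two (mapsTo_rotPerm_s19 hq (two_mul_mem_Ico_zero_one hx))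
      _ = (1 / 2) * rotOdo q π (2 * x) := by ring
  refine ⟨hhalf, fun x hx => ?_, fun x hx => ?_⟩
  · obtain ⟨hnonneg, hlt⟩ := mapsTo_rotOdo_s19 (π := π) hq (two_mul_mem_Ico_zero_one hx)
    rw [hhalf x hx]
    constructor <;> linarith
  · rw [hhalf x hx]
    ring

end Doubling

/-- if `π'` is the permutation of `{0,…,2q-1}` with `π' i = π i + q` for
`i < q` and `π' i = i - q` for `q ≤ i < 2q`, then on `[0,1/2)` the rotated odometer
`F_{π'}` (built from `2q` intervals) satisfies `F_{π'} x = (1/2)·F_π (2x)`.  In particular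
`[0,1/2)` is `F_{π'}`-invariant (the first return time to `[0,1/2)` is `1` everywhere), and
the first return map is conjugate to `F_π` via `h x = 2x`: `h (F_{π'} x) = F_π (h x)`. -/
theorem rotOdo_doubling (q : ℕ) (hq : 2 ≤ q) (π : Equiv.Perm (Fin q))
    (π' : Equiv.Perm (Fin (2 * q)))
    (hπ' : ∀ i : Fin (2 * q), ((π' i : ℕ) =
      if h : (i : ℕ) < q then ((π ⟨(i : ℕ), h⟩ : Fin q) : ℕ) + q else (i : ℕ) - q)) :
    (∀ x ∈ Set.Ico (0 : ℝ) (1 / 2),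
        rotOdo (2 * q) π' x = (1 / 2) * rotOdo q π (2 * x)) ∧
    Set.MapsTo (rotOdo (2 * q) π') (Set.Ico (0 : ℝ) (1 / 2)) (Set.Ico (0 : ℝ) (1 / 2)) ∧
    (∀ x ∈ Set.Ico (0 : ℝ) (1 / 2),
        2 * rotOdo (2 * q) π' x = rotOdo q π (2 * x)) :=
  rotOdo_doubling_general (Nat.zero_lt_of_lt hq) fun i => (hπ' _).trans (dif_pos i.isLt)
end
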